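/- For every ε > 0 there is a constant C(ε) such that for all T ≥ 10, with y = T^{3/4}: Σ over quadruples of positive integers n₁, n₂, n₃, n₄ ≤ y with √n₁ + √n₂ − √n₃ − √n₄ ≠ 0 of d(n₁)d(n₂)d(n₃)d(n₄)/(n₁n₂n₃n₄)^{3/4} · min(T², T^{3/2}/|√n₁ + √n₂ − √n₃ − √n₄|) ≤ C(ε) · T^{2−1/8+ε}. -/

import Mathlib

open Real MeasureTheory Finset
open scoped Classical

noncomputable section

/-!
Write `Δ = √n₁ + √n₂ - √n₃ - √n₄`. The symmetries of the sum allow `n₂ ≤ n₁` and `n₄ ≤ n₃ ≤ n₁`, and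
splitting all `nᵢ` and `|Δ|` dyadically reduces the theorem to a count: up to factors `N₁ ^ ε`, at
most `(N₁N₂N₃N₄)^{3/4} (δ^{1/4} + N₁^{1/2} δ)` quadruples with `nᵢ ∈ [Nᵢ, 2Nᵢ)` satisfy
`0 < |Δ| ≤ δ`. Three ranges of `δ` are treated differently.

* For large `δ` it suffices that `n₂, n₃, n₄` confine `n₁` to an interval of length `O(N₁^{1/2} δ)`.
* For medium `δ`, sort the sums `√a + √b` into bins of width `δ`. By Cauchy-Schwarz the count is at
  most a geometric mean of the second moments of the bin sizes, and such a moment is controlled by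
  the coincidences whose entries `b`, `b'` are close to each other.
* For small `δ`, Hölder's inequality bounds the cube of the count by third moments. This is
  interpolated with an arithmetic bound: squaring twice turns a near-coincidence into integers `p`,
  `t`, `r` with `r ≡ t² (mod p²)`, `r ≠ 0` small, and few quadruples above each choice of them.
-/

lemma nat_add_one_le_mul_rpow_pow {ε x K : ℝ} (hε : 0 < ε) (hx : 2 ≤ x) (hK : 1 ≤ K)
    (hKε : 1 ≤ K * (ε * log 2)) (a : ℕ) : (a : ℝ) + 1 ≤ K * (x ^ ε) ^ a := by
  have hexp : 1 + a * (ε * log 2) ≤ ((2 : ℝ) ^ ε) ^ a := by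
    rw [rpow_def_of_pos two_pos, ← Real.exp_nat_mul, mul_comm (log 2)]
    linarith [Real.add_one_le_exp (a * (ε * log 2))]
  calc (a : ℝ) + 1 ≤ K * (1 + a * (ε * log 2)) := by nlinarith [a.cast_nonneg (α := ℝ)]
    _ ≤ K * (x ^ ε) ^ a := by gcongr; exact hexp.trans (by gcongr)

lemma nat_add_one_le_rpow_pow {ε x : ℝ} (hx : 2 ≤ x ^ ε) (a : ℕ) : (a : ℝ) + 1 ≤ (x ^ ε) ^ a :=
  calc (a : ℝ) + 1 ≤ (2 : ℝ) ^ a := by exact_mod_cast Nat.lt_two_pow_self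
    _ ≤ (x ^ ε) ^ a := by gcongr

/- Only the primes `p < 2 ^ (1 / ε)` cost more than `1` in the comparison of `a + 1` with
`p ^ (a * ε)`, and they number at most `⌈2 ^ (1 / ε)⌉`. -/
theorem exists_card_divisors_le_mul_rpow {ε : ℝ} (hε : 0 < ε) :
    ∃ C : ℝ, 1 ≤ C ∧ ∀ n : ℕ, n ≠ 0 → (#n.divisors : ℝ) ≤ C * (n : ℝ) ^ ε := by
  set P : ℕ := ⌈(2 : ℝ) ^ (1 / ε)⌉₊
  set K : ℝ := max 1 (1 / (ε * log 2))
  have hK : 1 ≤ K := le_max_left _ _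
  have hKε : 1 ≤ K * (ε * log 2) :=
    (div_le_iff₀ (mul_pos hε (log_pos one_lt_two))).1 (le_max_right _ _)
  have local_bound : ∀ p : ℕ, p.Prime → ∀ a : ℕ,
      (a : ℝ) + 1 ≤ (if p < P then K else 1) * ((p : ℝ) ^ a) ^ ε := by
    intro p hp a
    have hp2 : (2 : ℝ) ≤ p := by exact_mod_cast hp.two_le
    rw [← rpow_pow_comm p.cast_nonneg]
    split_ifs with h
    · exact nat_add_one_le_mul_rpow_pow hε hp2 hK hKε a
    · rw [one_mul]
      refine nat_add_one_le_rpow_pow ?_ a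
      have hP : (2 : ℝ) ^ ε⁻¹ ≤ p := by
        rw [← one_div]; exact (Nat.le_ceil _).trans (by exact_mod_cast not_lt.1 h)
      exact (rpow_inv_le_iff_of_pos zero_le_two p.cast_nonneg hε).1 hP
  refine ⟨K ^ P, one_le_pow₀ hK, fun n hn => ?_⟩
  have hprod : (n : ℝ) = ∏ p ∈ n.primeFactors, (p : ℝ) ^ n.factorization p := by
    exact_mod_cast (Nat.prod_factorization_pow_eq_self hn).symm
  have hsmall : #{p ∈ n.primeFactors | p < P} ≤ P := by
    simpa using card_le_card (fun p hp => mem_range.2 (mem_filter.1 hp).2 :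
      {p ∈ n.primeFactors | p < P} ⊆ range P)
  rw [Nat.card_divisors hn]
  push_cast
  calc ∏ p ∈ n.primeFactors, ((n.factorization p : ℝ) + 1)
      ≤ ∏ p ∈ n.primeFactors, (if p < P then K else 1) * ((p : ℝ) ^ n.factorization p) ^ ε :=
        prod_le_prod (fun _ _ => by positivity)
          fun p hp => local_bound p (Nat.prime_of_mem_primeFactors hp) _
    _ = K ^ #{p ∈ n.primeFactors | p < P} * (n : ℝ) ^ ε := by
        rw [prod_mul_distrib, Real.finsetProd_rpow _ _ (fun _ _ => by positivity), ← hprod,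
          ← prod_filter, prod_const]
    _ ≤ K ^ P * (n : ℝ) ^ ε := by gcongr

section Fibers

variable {α β γ : Type*} [DecidableEq β] [DecidableEq γ] {P : Finset α}

/-- The number of representations of `d` as a value of `f` on `P`. -/
def fiberCard (P : Finset α) (f : α → β) (d : β) : ℕ := #{x ∈ P | f x = d}

/-- The `k`-th moment of the representation function of `f` on `P`. For `k = 2` it is the additive
energy of the paper, for `k = 1` it is the cardinality of `P`. -/
def fiberMoment (k : ℕ) (P : Finset α) (f : α → β) : ℕ := ∑ d ∈ P.image f, fiberCard P f d ^ k

lemma fiberCard_eq_zero {f : α → β} {d : β} (hd : d ∉ P.image f) : fiberCard P f d = 0 :=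
  card_eq_zero.2 (filter_eq_empty_iff.2 fun _ hx hxd => hd (mem_image.2 ⟨_, hx, hxd⟩))

lemma sum_fiberCard_pow_le {k : ℕ} (hk : k ≠ 0) (f : α → β) (D : Finset β) :
    ∑ d ∈ D, fiberCard P f d ^ k ≤ fiberMoment k P f :=
  calc ∑ d ∈ D, fiberCard P f d ^ k ≤ ∑ d ∈ D ∪ P.image f, fiberCard P f d ^ k :=
        sum_le_sum_of_subset subset_union_left
    _ = fiberMoment k P f :=
        (sum_subset subset_union_right fun d _ hd => by rw [fiberCard_eq_zero hd, zero_pow hk]).symm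

lemma sum_fiberCard_sub_pow_le {k : ℕ} (hk : k ≠ 0) (f : α → ℤ) (D : Finset ℤ) (e : ℤ) :
    ∑ d ∈ D, fiberCard P f (d - e) ^ k ≤ fiberMoment k P f := by
  have h := sum_fiberCard_pow_le (P := P) hk f (D.image (· - e))
  rwa [sum_image sub_left_injective.injOn] at h

lemma fiberMoment_one (f : α → β) : fiberMoment 1 P f = #P := by
  simp only [fiberMoment, fiberCard, pow_one]
  exact (card_eq_sum_card_image f P).symm

lemma fiberMoment_two (f : α → β) : fiberMoment 2 P f = #{z ∈ P ×ˢ P | f z.1 = f z.2} := by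
  rw [card_eq_sum_card_fiberwise (f := fun z => f z.1) (t := P.image f) fun z hz =>
    mem_image_of_mem f (mem_product.1 (mem_filter.1 hz).1).1]
  refine sum_congr rfl fun d _ => ?_
  rw [fiberCard, sq, ← card_product]
  congr 1
  ext ⟨x, y⟩
  simp only [mem_filter, mem_product]
  constructor
  · rintro ⟨⟨hx, rfl⟩, hy, hxy⟩
    exact ⟨⟨⟨hx, hy⟩, hxy.symm⟩, rfl⟩
  · rintro ⟨⟨⟨hx, hy⟩, hxy⟩, rfl⟩
    exact ⟨⟨hx, rfl⟩, hy, hxy.symm⟩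

lemma fiberMoment_two_le_card_mul {f : α → β} {g : α → γ} {S : Finset γ} (hg : ∀ x ∈ P, g x ∈ S) :
    fiberMoment 2 P f ≤ #S * fiberMoment 2 P (fun x => (f x, g x)) := by
  have hsplit : ∀ d, fiberCard P f d = ∑ s ∈ S, fiberCard P (fun x => (f x, g x)) (d, s) := by
    intro d
    rw [fiberCard, card_eq_sum_card_fiberwise (f := g) (t := S) fun x hx =>
      hg x (mem_filter.1 hx).1]
    simp only [fiberCard, filter_filter, Prod.mk.injEq]
  calc fiberMoment 2 P f
      ≤ ∑ d ∈ P.image f, #S * ∑ s ∈ S, fiberCard P (fun x => (f x, g x)) (d, s) ^ 2 :=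
        sum_le_sum fun d _ => by rw [hsplit]; exact_mod_cast sq_sum_le_card_mul_sum_sq
    _ = #S * ∑ z ∈ P.image f ×ˢ S, fiberCard P (fun x => (f x, g x)) z ^ 2 := by
        rw [sum_product, mul_sum]
    _ ≤ #S * fiberMoment 2 P (fun x => (f x, g x)) := by
        gcongr; exact sum_fiberCard_pow_le two_ne_zero _ _

lemma fiberMoment_two_le_card_add {k : α → β} {h : α → ℕ}
    (hinj : ∀ x ∈ P, ∀ y ∈ P, k x = k y → h x = h y → x = y) :
    fiberMoment 2 P k ≤ #P + 2 * #{z ∈ P ×ˢ P | k z.1 = k z.2 ∧ h z.1 < h z.2} := by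
  set U := {z ∈ P ×ˢ P | k z.1 = k z.2 ∧ h z.1 < h z.2}
  have hsub : {z ∈ P ×ˢ P | k z.1 = k z.2} ⊆
      P.image (fun x => (x, x)) ∪ (U ∪ U.image Prod.swap) := by
    rintro ⟨x, y⟩ hz
    obtain ⟨hxy, hk⟩ := mem_filter.1 hz
    obtain ⟨hx, hy⟩ := mem_product.1 hxy
    simp only [mem_union, mem_image]
    rcases lt_trichotomy (h x) (h y) with hlt | heq | hgt
    · exact .inr (.inl (mem_filter.2 ⟨hxy, hk, hlt⟩))
    · exact .inl ⟨x, hx, by rw [hinj x hx y hy hk heq]⟩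
    · exact .inr (.inr ⟨(y, x), mem_filter.2 ⟨mem_product.2 ⟨hy, hx⟩, hk.symm, hgt⟩, rfl⟩)
  rw [fiberMoment_two]
  calc _ ≤ #(P.image fun x => (x, x)) + #(U ∪ U.image Prod.swap) :=
        (card_le_card hsub).trans (card_union_le _ _)
    _ ≤ #P + (#U + #U) := by
        gcongr
        · exact card_image_le
        · exact (card_union_le _ _).trans (Nat.add_le_add_left card_image_le _)
    _ = #P + 2 * #U := by ring

/- Cutting `[B, 2B)` into blocks of length `L` costs a factor equal to the number of blocks, by
Cauchy-Schwarz, and leaves only coincidences between points of the same block. -/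
lemma fiberMoment_two_le_of_mem_Ico {f : α → β} {h : α → ℕ} {B L : ℕ} (hL : 0 < L)
    (hB : ∀ x ∈ P, h x ∈ Ico B (2 * B))
    (hinj : ∀ x ∈ P, ∀ y ∈ P, f x = f y → h x = h y → x = y) :
    fiberMoment 2 P f ≤ (B / L + 2) *
      (#P + 2 * #{z ∈ P ×ˢ P | f z.1 = f z.2 ∧ h z.1 < h z.2 ∧ h z.2 < h z.1 + L}) := by
  have hblock : ∀ x ∈ P, h x / L ∈ Icc (B / L) (2 * B / L) := fun x hx => by
    obtain ⟨hl, hu⟩ := mem_Ico.1 (hB x hx)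
    exact mem_Icc.2 ⟨Nat.div_le_div_right hl, Nat.div_le_div_right hu.le⟩
  have hblocks : #(Icc (B / L) (2 * B / L)) ≤ B / L + 2 := by
    have h2B : 2 * B / L < 2 * (B / L) + 2 :=
      Nat.div_lt_of_lt_mul (by linarith [Nat.lt_mul_div_succ B hL])
    rw [Nat.card_Icc]
    lia
  have hsame : ∀ x y, h x / L = h y / L → h y < h x + L := fun x y hxy => by
    have hx := Nat.div_add_mod (h x) L
    have hy := Nat.div_add_mod (h y) L
    rw [← hxy] at hy
    have := Nat.mod_lt (h y) hL
    lia
  refine (fiberMoment_two_le_card_mul hblock).trans (Nat.mul_le_mul hblocks ?_)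
  refine (fiberMoment_two_le_card_add (h := h) fun x hx y hy hxy =>
    hinj x hx y hy (Prod.mk.inj hxy).1).trans ?_
  refine Nat.add_le_add_left (Nat.mul_le_mul_left 2 (card_le_card fun z hz => ?_)) _
  obtain ⟨hz, hk, hlt⟩ := mem_filter.1 hz
  obtain ⟨hf, hdiv⟩ := Prod.mk.inj hk
  exact mem_filter.2 ⟨hz, hf, hlt, hsame _ _ hdiv⟩

end Fibers

section ClosePairs

variable {α β : Type*}

/-- The pairs of points at which two integer-valued maps differ by at most one. -/
def closePairs (P : Finset α) (Q : Finset β) (f : α → ℤ) (g : β → ℤ) : Finset (α × β) :=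
  {z ∈ P ×ˢ Q | |f z.1 - g z.2| ≤ 1}

variable (P : Finset α) (Q : Finset β) (f : α → ℤ) (g : β → ℤ)

lemma exists_card_closePairs_le : ∃ e : ℤ,
    #(closePairs P Q f g) ≤ 3 * ∑ d ∈ P.image f, fiberCard P f d * fiberCard Q g (d - e) := by
  set shifts : Finset ℤ := Icc (-1) 1
  have hmaps : ∀ z ∈ closePairs P Q f g, f z.1 - g z.2 ∈ shifts := fun z hz =>
    mem_Icc.2 (abs_le.1 (mem_filter.1 hz).2)
  obtain ⟨e, -, he⟩ := exists_max_image shifts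
    (fun e => #{z ∈ closePairs P Q f g | f z.1 - g z.2 = e}) ⟨0, by decide⟩
  refine ⟨e, ?_⟩
  have hfiber : #{z ∈ closePairs P Q f g | f z.1 - g z.2 = e} ≤
      ∑ d ∈ P.image f, fiberCard P f d * fiberCard Q g (d - e) := by
    have hf : ∀ z ∈ {z ∈ closePairs P Q f g | f z.1 - g z.2 = e}, f z.1 ∈ P.image f := fun z hz =>
      mem_image_of_mem f (mem_product.1 (mem_filter.1 (mem_filter.1 hz).1).1).1
    rw [card_eq_sum_card_fiberwise hf]
    refine sum_le_sum fun d _ => ?_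
    rw [fiberCard, fiberCard, ← card_product]
    refine card_le_card fun z hz => ?_
    obtain ⟨⟨⟨hz, -⟩, hze⟩, hzd⟩ : ((z ∈ P ×ˢ Q ∧ _) ∧ _) ∧ f z.1 = d := by
      simpa only [mem_filter, closePairs] using hz
    obtain ⟨hx, hy⟩ := mem_product.1 hz
    exact mem_product.2 ⟨mem_filter.2 ⟨hx, hzd⟩, mem_filter.2 ⟨hy, by lia⟩⟩
  calc #(closePairs P Q f g) = ∑ e ∈ shifts, #{z ∈ closePairs P Q f g | f z.1 - g z.2 = e} :=
        card_eq_sum_card_fiberwise hmaps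
    _ ≤ #shifts • #{z ∈ closePairs P Q f g | f z.1 - g z.2 = e} := sum_le_card_nsmul _ _ _ he
    _ ≤ 3 * ∑ d ∈ P.image f, fiberCard P f d * fiberCard Q g (d - e) :=
        Nat.mul_le_mul_left 3 hfiber

lemma card_closePairs_sq_le :
    #(closePairs P Q f g) ^ 2 ≤ 9 * (fiberMoment 2 P f * fiberMoment 2 Q g) := by
  obtain ⟨e, he⟩ := exists_card_closePairs_le P Q f g
  calc #(closePairs P Q f g) ^ 2
      ≤ (3 * ∑ d ∈ P.image f, fiberCard P f d * fiberCard Q g (d - e)) ^ 2 := by gcongr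
    _ = 9 * (∑ d ∈ P.image f, fiberCard P f d * fiberCard Q g (d - e)) ^ 2 := by ring
    _ ≤ 9 * ((∑ d ∈ P.image f, fiberCard P f d ^ 2) *
          ∑ d ∈ P.image f, fiberCard Q g (d - e) ^ 2) := by
        gcongr; exact sum_mul_sq_le_sq_mul_sq _ _ _
    _ ≤ 9 * (fiberMoment 2 P f * fiberMoment 2 Q g) := by
        gcongr
        · exact le_rfl
        · exact sum_fiberCard_sub_pow_le two_ne_zero g _ e

/- Hölder with exponents `3` and `3 / 2`, followed by Cauchy-Schwarz for
`s ^ (3 / 2) = s ^ (1 / 2) * s`. -/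
lemma sum_mul_cube_le {ι : Type*} (D : Finset ι) {r s : ι → ℝ} (hr : ∀ i, 0 ≤ r i)
    (hs : ∀ i, 0 ≤ s i) :
    (∑ i ∈ D, r i * s i) ^ 3 ≤ (∑ i ∈ D, r i ^ 3) * ((∑ i ∈ D, s i) * ∑ i ∈ D, s i ^ 2) := by
  have hpq : Real.HolderConjugate 3 (3 / 2) := by rw [Real.holderConjugate_iff]; norm_num
  have holder := Real.inner_le_Lp_mul_Lq_of_nonneg D hpq (fun i _ => hr i) (fun i _ => hs i)
  have cauchy : (∑ i ∈ D, s i ^ (3 / 2 : ℝ)) ^ 2 ≤ (∑ i ∈ D, s i) * ∑ i ∈ D, s i ^ 2 := by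
    have hmul : ∀ i, √(s i) * s i = s i ^ (3 / 2 : ℝ) := fun i => by
      rw [sqrt_eq_rpow, show (3 / 2 : ℝ) = 1 / 2 + 1 by norm_num,
        rpow_add_one' (hs i) (by norm_num)]
    simpa only [hmul, sq_sqrt (hs _)] using sum_mul_sq_le_sq_mul_sq D (fun i => √(s i)) s
  have hA : 0 ≤ ∑ i ∈ D, r i ^ (3 : ℝ) := sum_nonneg fun i _ => rpow_nonneg (hr i) _
  have hB : 0 ≤ ∑ i ∈ D, s i ^ (3 / 2 : ℝ) := sum_nonneg fun i _ => rpow_nonneg (hs i) _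
  calc (∑ i ∈ D, r i * s i) ^ 3
      ≤ ((∑ i ∈ D, r i ^ (3 : ℝ)) ^ (1 / 3 : ℝ) *
          (∑ i ∈ D, s i ^ (3 / 2 : ℝ)) ^ (1 / (3 / 2) : ℝ)) ^ 3 :=
        pow_le_pow_left₀ (sum_nonneg fun i _ => mul_nonneg (hr i) (hs i)) holder 3
    _ = (∑ i ∈ D, r i ^ (3 : ℝ)) * (∑ i ∈ D, s i ^ (3 / 2 : ℝ)) ^ 2 := by
        rw [mul_pow, ← rpow_mul_natCast hA, ← rpow_mul_natCast hB]
        norm_num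
    _ = (∑ i ∈ D, r i ^ 3) * (∑ i ∈ D, s i ^ (3 / 2 : ℝ)) ^ 2 := by
        norm_cast
    _ ≤ (∑ i ∈ D, r i ^ 3) * ((∑ i ∈ D, s i) * ∑ i ∈ D, s i ^ 2) :=
        mul_le_mul_of_nonneg_left cauchy (sum_nonneg fun i _ => pow_nonneg (hr i) 3)

lemma card_closePairs_cube_le :
    #(closePairs P Q f g) ^ 3 ≤ 27 * (fiberMoment 3 P f * (#Q * fiberMoment 2 Q g)) := by
  obtain ⟨e, he⟩ := exists_card_closePairs_le P Q f g
  have holder : (∑ d ∈ P.image f, fiberCard P f d * fiberCard Q g (d - e)) ^ 3 ≤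
      (∑ d ∈ P.image f, fiberCard P f d ^ 3) * ((∑ d ∈ P.image f, fiberCard Q g (d - e)) *
        ∑ d ∈ P.image f, fiberCard Q g (d - e) ^ 2) := by
    exact_mod_cast sum_mul_cube_le (P.image f) (r := fun d => fiberCard P f d)
      (s := fun d => fiberCard Q g (d - e)) (fun _ => Nat.cast_nonneg _) fun _ => Nat.cast_nonneg _
  have hone : ∑ d ∈ P.image f, fiberCard Q g (d - e) ≤ #Q := by
    simpa only [pow_one, fiberMoment_one] using sum_fiberCard_sub_pow_le one_ne_zero g (P.image f) e
  calc #(closePairs P Q f g) ^ 3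
      ≤ (3 * ∑ d ∈ P.image f, fiberCard P f d * fiberCard Q g (d - e)) ^ 3 := by gcongr
    _ = 27 * (∑ d ∈ P.image f, fiberCard P f d * fiberCard Q g (d - e)) ^ 3 := by ring
    _ ≤ 27 * ((∑ d ∈ P.image f, fiberCard P f d ^ 3) * ((∑ d ∈ P.image f, fiberCard Q g (d - e)) *
          ∑ d ∈ P.image f, fiberCard Q g (d - e) ^ 2)) := by gcongr
    _ ≤ 27 * (fiberMoment 3 P f * (#Q * fiberMoment 2 Q g)) := by
        gcongr
        · exact le_rfl
        · exact sum_fiberCard_sub_pow_le two_ne_zero g _ e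

end ClosePairs

section IntegerIntervals

variable {B : ℕ} {S : Finset ℕ}

lemma card_le_six_mul_card_near_pairs (hS : S ⊆ Ico B (2 * B)) (hcard : 4 ≤ #S) :
    #S ≤ 6 * #{z ∈ S ×ˢ S | z.1 < z.2 ∧ z.2 < z.1 + (4 * B / #S + 1)} := by
  set L := 4 * B / #S + 1
  set U := {z ∈ S ×ˢ S | z.1 < z.2 ∧ z.2 < z.1 + L}
  have hLB : 4 * B < #S * L := Nat.lt_mul_div_succ _ (by lia)
  have hblocks : 4 * (B / L) < #S := by
    by_contra! h
    nlinarith [Nat.div_mul_le_self B L]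
  have hmoment : #S ^ 2 ≤ (B / L + 2) * (#S + 2 * #U) := by
    have h := fiberMoment_two_le_of_mem_Ico (f := fun _ : ℕ => ()) (h := id)
      (Nat.succ_pos (4 * B / #S)) (fun x hx => hS hx) (fun _ _ _ _ _ hxy => hxy)
    simpa only [fiberMoment_two, filter_true, card_product, true_and, id_eq, sq] using h
  have hcancel : #S * (4 * #S) ≤ #S * (3 * (#S + 2 * #U)) := by nlinarith
  have := Nat.le_of_mul_le_mul_left hcancel (by lia)
  lia

lemma card_cube_le_sum_inv_sq (hS : S ⊆ Ico B (2 * B)) :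
    (#S : ℝ) ^ 3 ≤ 9 * #S + 96 * (B : ℝ) ^ 2 *
      ∑ z ∈ S ×ˢ S with z.1 < z.2, 1 / ((z.2 - z.1 : ℕ) : ℝ) ^ 2 := by
  rcases lt_or_ge #S 4 with hsmall | hlarge
  · have hcube : (#S : ℝ) ^ 3 ≤ 9 * #S := by
      exact_mod_cast (by interval_cases #S <;> norm_num : #S ^ 3 ≤ 9 * #S)
    have : 0 ≤ 96 * (B : ℝ) ^ 2 * ∑ z ∈ S ×ˢ S with z.1 < z.2, 1 / ((z.2 - z.1 : ℕ) : ℝ) ^ 2 := by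
      positivity
    linarith
  have hB : 0 < B := by
    obtain ⟨x, hx⟩ := card_pos.1 (by lia : 0 < #S)
    have := mem_Ico.1 (hS hx)
    lia
  set U := {z ∈ S ×ˢ S | z.1 < z.2 ∧ z.2 < z.1 + (4 * B / #S + 1)}
  have hterm : ∀ z ∈ U, (#S : ℝ) ^ 2 / (16 * (B : ℝ) ^ 2) ≤ 1 / ((z.2 - z.1 : ℕ) : ℝ) ^ 2 := by
    intro z hz
    obtain ⟨-, hlt, hnear⟩ := mem_filter.1 hz
    have hpos : (0 : ℝ) < (z.2 - z.1 : ℕ) := by exact_mod_cast (by lia : 0 < z.2 - z.1)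
    have hle : ((z.2 - z.1 : ℕ) : ℝ) ≤ 4 * B / #S :=
      calc ((z.2 - z.1 : ℕ) : ℝ) ≤ (4 * B / #S : ℕ) := by exact_mod_cast (by lia)
        _ ≤ 4 * B / #S := by exact_mod_cast Nat.cast_div_le (α := ℝ)
    calc (#S : ℝ) ^ 2 / (16 * (B : ℝ) ^ 2) = 1 / (4 * B / #S : ℝ) ^ 2 := by field_simp; norm_num
      _ ≤ 1 / ((z.2 - z.1 : ℕ) : ℝ) ^ 2 := by gcongr
  have hU : (#S : ℝ) ≤ 6 * #U := by exact_mod_cast card_le_six_mul_card_near_pairs hS hlarge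
  calc (#S : ℝ) ^ 3 = #S * (#S : ℝ) ^ 2 := by ring
    _ ≤ 6 * #U * (#S : ℝ) ^ 2 := by gcongr
    _ = 96 * (B : ℝ) ^ 2 * ∑ _z ∈ U, (#S : ℝ) ^ 2 / (16 * (B : ℝ) ^ 2) := by
        rw [sum_const, nsmul_eq_mul]; field_simp; ring
    _ ≤ 96 * (B : ℝ) ^ 2 * ∑ z ∈ S ×ˢ S with z.1 < z.2, 1 / ((z.2 - z.1 : ℕ) : ℝ) ^ 2 := by
        gcongr
        refine (sum_le_sum hterm).trans (sum_le_sum_of_subset_of_nonneg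
          (fun z hz => ?_) fun _ _ _ => by positivity)
        obtain ⟨hz, hlt, -⟩ := mem_filter.1 hz
        exact mem_filter.2 ⟨hz, hlt⟩
    _ ≤ _ := le_add_of_nonneg_left (by positivity)

lemma card_le_one_add_of_sub_le {R : ℝ} (hR : 0 ≤ R)
    (h : ∀ x ∈ S, ∀ y ∈ S, x < y → (y : ℝ) - x ≤ R) : (#S : ℝ) ≤ 1 + R := by
  rcases S.eq_empty_or_nonempty with rfl | hne
  · simpa using add_nonneg zero_le_one hR
  have hsub : S ⊆ Icc (S.min' hne) (S.min' hne + ⌊R⌋₊) := by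
    intro y hy
    have hmin := S.min'_le y hy
    refine mem_Icc.2 ⟨hmin, ?_⟩
    rcases hmin.eq_or_lt with heq | hlt
    · lia
    · have : y - S.min' hne ≤ ⌊R⌋₊ :=
        Nat.le_floor (by rw [Nat.cast_sub hmin]; exact h _ (S.min'_mem hne) y hy hlt)
      lia
  have hcard : #S ≤ ⌊R⌋₊ + 1 := by
    have := card_le_card hsub
    rw [Nat.card_Icc] at this
    lia
  calc (#S : ℝ) ≤ ⌊R⌋₊ + 1 := by exact_mod_cast hcard
    _ ≤ 1 + R := by linarith [Nat.floor_le hR]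

end IntegerIntervals

section SquareRoots

lemma sqrt_sub_mul_sqrt_add {x y : ℝ} (hx : 0 ≤ x) (hy : 0 ≤ y) :
    (√x - √y) * (√x + √y) = x - y := by
  linear_combination mul_self_sqrt hx - mul_self_sqrt hy

lemma sqrt_le_sqrt_of_mem_Ico {A a : ℕ} (ha : a ∈ Ico A (2 * A)) : √(A : ℝ) ≤ √(a : ℝ) :=
  sqrt_le_sqrt (by exact_mod_cast (mem_Ico.1 ha).1)

lemma sqrt_le_of_mem_Ico {A a : ℕ} (ha : a ∈ Ico A (2 * A)) : √(a : ℝ) ≤ 3 / 2 * √(A : ℝ) := by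
  have haA : (a : ℝ) ≤ 2 * A := by exact_mod_cast (mem_Ico.1 ha).2.le
  refine sqrt_le_iff.2 ⟨by positivity, ?_⟩
  rw [mul_pow, sq_sqrt A.cast_nonneg]
  linarith [A.cast_nonneg (α := ℝ)]

variable {A : ℕ} {δ v : ℝ}

/-- The pairs in `[A, 2A)` whose square roots differ by `v`, up to an error less than `δ`. -/
def sqrtDiffPairs (A : ℕ) (δ v : ℝ) : Finset (ℕ × ℕ) :=
  {z ∈ Ico A (2 * A) ×ˢ Ico A (2 * A) | |√(z.1 : ℝ) - √(z.2 : ℝ) - v| < δ}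

lemma sub_bounds_of_mem_sqrtDiffPairs (hδ : 0 < δ) (hv : 2 * δ ≤ v) {z : ℕ × ℕ}
    (hz : z ∈ sqrtDiffPairs A δ v) :
    v * √(A : ℝ) ≤ (z.1 : ℝ) - z.2 ∧ (z.1 : ℝ) - z.2 ≤ 9 / 2 * v * √(A : ℝ) := by
  obtain ⟨hbox, hclose⟩ := mem_filter.1 hz
  obtain ⟨ha, hb⟩ := mem_product.1 hbox
  obtain ⟨hlo, hhi⟩ := abs_lt.1 hclose
  have hbl := sqrt_le_sqrt_of_mem_Ico hb
  have hau := sqrt_le_of_mem_Ico ha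
  rw [← sqrt_sub_mul_sqrt_add z.1.cast_nonneg z.2.cast_nonneg]
  constructor
  · calc v * √(A : ℝ) = v / 2 * (2 * √(A : ℝ)) := by ring
      _ ≤ (√z.1 - √z.2) * (√z.1 + √z.2) :=
        mul_le_mul (by linarith) (by linarith) (by positivity) (by linarith)
  · calc (√z.1 - √z.2) * (√z.1 + √z.2) ≤ (3 / 2 * v) * (3 * √(A : ℝ)) :=
        mul_le_mul (by linarith) (by linarith) (by positivity) (by linarith)
      _ = 9 / 2 * v * √(A : ℝ) := by ring

/- If `a - b = a' - b'`, then `√a - √b` decreases in `b` at rate at least `v / A`, so an interval of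
length `2δ` for it confines `b` to an interval of length `O(δA / v)`. -/
lemma sub_le_of_sub_eq_of_mem_sqrtDiffPairs (hδ : 0 < δ) (hv : 2 * δ ≤ v) {z w : ℕ × ℕ}
    (hz : z ∈ sqrtDiffPairs A δ v) (hw : w ∈ sqrtDiffPairs A δ v)
    (hsub : (z.1 : ℝ) - z.2 = w.1 - w.2) (hlt : z.2 < w.2) :
    (w.2 : ℝ) - z.2 ≤ 36 * δ * A / v := by
  have hz' := abs_lt.1 (mem_filter.1 hz).2
  obtain ⟨hwbox, hwclose⟩ := mem_filter.1 hw
  have hw' := abs_lt.1 hwclose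
  have hltR : (z.2 : ℝ) < w.2 := by exact_mod_cast hlt
  have hα : √(z.1 : ℝ) ≤ √w.1 := sqrt_le_sqrt (by linarith)
  have hβ : √(z.2 : ℝ) ≤ √w.2 := sqrt_le_sqrt hltR.le
  have hau' := sqrt_le_of_mem_Ico (mem_product.1 hwbox).1
  have hmean : v / 2 * (√w.2 - √z.2) ≤ 2 * δ * (3 * √(A : ℝ)) :=
    calc v / 2 * (√w.2 - √z.2) ≤ (√z.1 - √z.2) * ((√w.1 - √z.1) + (√w.2 - √z.2)) :=
          mul_le_mul (by linarith) (by linarith) (by linarith) (by linarith)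
      _ = ((√z.1 - √z.2) - (√w.1 - √w.2)) * (√w.1 + √w.2) := by
          linear_combination sqrt_sub_mul_sqrt_add w.1.cast_nonneg w.2.cast_nonneg
            - sqrt_sub_mul_sqrt_add z.1.cast_nonneg z.2.cast_nonneg - hsub
      _ ≤ 2 * δ * (√w.1 + √w.2) := by gcongr; linarith
      _ ≤ 2 * δ * (3 * √(A : ℝ)) := by gcongr; linarith
  rw [le_div_iff₀ (by linarith)]
  calc ((w.2 : ℝ) - z.2) * v = (√w.2 - √z.2) * (√w.2 + √z.2) * v := by
        rw [sqrt_sub_mul_sqrt_add w.2.cast_nonneg z.2.cast_nonneg]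
    _ ≤ (√w.2 - √z.2) * (3 * √(A : ℝ)) * v := by gcongr <;> linarith
    _ = v / 2 * (√w.2 - √z.2) * (6 * √(A : ℝ)) := by ring
    _ ≤ 2 * δ * (3 * √(A : ℝ)) * (6 * √(A : ℝ)) := by gcongr
    _ = 36 * δ * A := by linear_combination 36 * δ * mul_self_sqrt A.cast_nonneg

lemma card_sqrtDiffPairs_fiber_le (hδ : 0 < δ) (hv : 2 * δ ≤ v) (g : ℕ) :
    (#{z ∈ sqrtDiffPairs A δ v | z.1 = z.2 + g} : ℝ) ≤ 1 + 36 * δ * A / v := by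
  set W := {z ∈ sqrtDiffPairs A δ v | z.1 = z.2 + g}
  have hinj : Set.InjOn Prod.snd (W : Set (ℕ × ℕ)) := fun z hz w hw hzw => by
    have h1 := (mem_filter.1 hz).2
    have h2 := (mem_filter.1 hw).2
    exact Prod.ext (by rw [h1, h2, hzw]) hzw
  rw [← card_image_of_injOn hinj]
  have : 0 < v := by linarith
  refine card_le_one_add_of_sub_le (by positivity) fun x hx y hy hxy => ?_
  obtain ⟨z, hz, rfl⟩ := mem_image.1 hx
  obtain ⟨w, hw, rfl⟩ := mem_image.1 hy
  obtain ⟨hz, hzg⟩ := mem_filter.1 hz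
  obtain ⟨hw, hwg⟩ := mem_filter.1 hw
  refine sub_le_of_sub_eq_of_mem_sqrtDiffPairs hδ hv hz hw ?_ hxy
  rw [hzg, hwg]
  push_cast
  ring

lemma card_sqrtDiffPairs_le (hA : 0 < A) (hδ : 0 < δ) (hv : 2 * δ ≤ v) :
    (#(sqrtDiffPairs A δ v) : ℝ) ≤ 9 / 2 * v * √(A : ℝ) + 162 * δ * A * √(A : ℝ) := by
  have hv0 : 0 < v := by linarith
  have : 0 < √(A : ℝ) := sqrt_pos.2 (by exact_mod_cast hA)
  set G := Icc 1 ⌊9 / 2 * v * √(A : ℝ)⌋₊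
  have hlt : ∀ z ∈ sqrtDiffPairs A δ v, z.2 < z.1 := fun z hz => by
    have h := (sub_bounds_of_mem_sqrtDiffPairs hδ hv hz).1
    have : 0 < v * √(A : ℝ) := by positivity
    exact_mod_cast (by linarith : (z.2 : ℝ) < z.1)
  have hmaps : ∀ z ∈ sqrtDiffPairs A δ v, z.1 - z.2 ∈ G := fun z hz => by
    have := hlt z hz
    refine mem_Icc.2 ⟨by lia, Nat.le_floor ?_⟩
    rw [Nat.cast_sub this.le]
    exact (sub_bounds_of_mem_sqrtDiffPairs hδ hv hz).2
  have hfiber : ∀ g, #{z ∈ sqrtDiffPairs A δ v | z.1 - z.2 = g} ≤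
      #{z ∈ sqrtDiffPairs A δ v | z.1 = z.2 + g} := fun g => card_le_card fun z hz => by
    obtain ⟨hz, hg⟩ := mem_filter.1 hz
    exact mem_filter.2 ⟨hz, by have := hlt z hz; lia⟩
  calc (#(sqrtDiffPairs A δ v) : ℝ)
      = ∑ g ∈ G, (#{z ∈ sqrtDiffPairs A δ v | z.1 - z.2 = g} : ℝ) := by
        exact_mod_cast card_eq_sum_card_fiberwise hmaps
    _ ≤ ∑ _g ∈ G, (1 + 36 * δ * A / v) := sum_le_sum fun g _ =>
        (Nat.cast_le.2 (hfiber g)).trans (card_sqrtDiffPairs_fiber_le hδ hv g)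
    _ = ⌊9 / 2 * v * √(A : ℝ)⌋₊ * (1 + 36 * δ * A / v) := by
        rw [sum_const, nsmul_eq_mul, Nat.card_Icc, Nat.add_sub_cancel]
    _ ≤ 9 / 2 * v * √(A : ℝ) * (1 + 36 * δ * A / v) := by
        gcongr; exact Nat.floor_le (by positivity)
    _ = 9 / 2 * v * √(A : ℝ) + 162 * δ * A * √(A : ℝ) := by field_simp; ring

end SquareRoots

section SqrtSumBins

/-- The left-hand side `√n₁ + √n₂` of the near-coincidence, as a function of the pair `(n₁, n₂)`. -/
def sqrtSum (x : ℕ × ℕ) : ℝ := √(x.1 : ℝ) + √(x.2 : ℝ)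

/-- The index of the interval `[kδ, (k + 1)δ)` that contains `sqrtSum x`. -/
def sqrtSumBin (δ : ℝ) (x : ℕ × ℕ) : ℤ := ⌊sqrtSum x / δ⌋

/-- The pairs with first entry in `[A, 2A)` and second entry in `[B, 2B)`. -/
def dyadicBox (A B : ℕ) : Finset (ℕ × ℕ) := Ico A (2 * A) ×ˢ Ico B (2 * B)

/-- The pairs of points of a dyadic box which lie in the same bin and whose second entries differ
by exactly `h`. -/
def binCoincidences (A B : ℕ) (δ : ℝ) (h : ℕ) : Finset ((ℕ × ℕ) × (ℕ × ℕ)) :=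
  {z ∈ dyadicBox A B ×ˢ dyadicBox A B |
    sqrtSumBin δ z.1 = sqrtSumBin δ z.2 ∧ z.2.2 = z.1.2 + h}

variable {A B : ℕ} {δ : ℝ}

lemma card_dyadicBox (A B : ℕ) : #(dyadicBox A B) = A * B := by
  rw [dyadicBox, card_product, Nat.card_Ico, Nat.card_Ico]
  congr 1 <;> lia

lemma sqrt_mul_sqrt_le (hBA : B ≤ A) : √(A : ℝ) * √(B : ℝ) ≤ A :=
  calc √(A : ℝ) * √(B : ℝ) ≤ √(A : ℝ) * √(A : ℝ) := by gcongr
    _ = A := mul_self_sqrt A.cast_nonneg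

lemma abs_sqrtSum_sub_lt (hδ : 0 < δ) {x y : ℕ × ℕ} (h : sqrtSumBin δ x = sqrtSumBin δ y) :
    |sqrtSum x - sqrtSum y| < δ := by
  have hfloor := Int.abs_sub_lt_one_of_floor_eq_floor h
  rwa [← sub_div, abs_div, abs_of_pos hδ, div_lt_one hδ] at hfloor

lemma two_mul_le_sqrt_sub_sqrt {b c : ℕ} (hb : b ∈ Ico B (2 * B)) (hc : c ∈ Ico B (2 * B))
    (hbc : b < c) (hδB : 8 * δ * √(B : ℝ) ≤ 1) : 2 * δ ≤ √(c : ℝ) - √(b : ℝ) := by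
  have hB : 0 < √(B : ℝ) := sqrt_pos.2 (by have := mem_Ico.1 hb; exact_mod_cast (by lia : 0 < B))
  have hsub : (1 : ℝ) ≤ c - b := by
    have : (b : ℝ) + 1 ≤ c := by exact_mod_cast hbc
    linarith
  have hgap : 0 ≤ √(c : ℝ) - √(b : ℝ) := sub_nonneg.2 (sqrt_le_sqrt (by exact_mod_cast hbc.le))
  have hone : 1 ≤ (√(c : ℝ) - √(b : ℝ)) * (3 * √(B : ℝ)) :=
    calc (1 : ℝ) ≤ c - b := hsub
      _ = (√(c : ℝ) - √(b : ℝ)) * (√(c : ℝ) + √(b : ℝ)) :=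
        (sqrt_sub_mul_sqrt_add c.cast_nonneg b.cast_nonneg).symm
      _ ≤ (√(c : ℝ) - √(b : ℝ)) * (3 * √(B : ℝ)) := by
        gcongr; linarith [sqrt_le_of_mem_Ico hb, sqrt_le_of_mem_Ico hc]
  nlinarith

lemma sqrt_sub_sqrt_le {b c : ℕ} (hB : 0 < B) (hb : b ∈ Ico B (2 * B)) (hbc : b ≤ c) :
    √(c : ℝ) - √(b : ℝ) ≤ ((c : ℝ) - b) / (2 * √(B : ℝ)) := by
  have : 0 < √(B : ℝ) := sqrt_pos.2 (by exact_mod_cast hB)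
  have hbc' : √(b : ℝ) ≤ √(c : ℝ) := sqrt_le_sqrt (by exact_mod_cast hbc)
  rw [le_div_iff₀ (by positivity)]
  calc (√(c : ℝ) - √(b : ℝ)) * (2 * √(B : ℝ))
      ≤ (√(c : ℝ) - √(b : ℝ)) * (√(c : ℝ) + √(b : ℝ)) := by
        gcongr; linarith [sqrt_le_sqrt_of_mem_Ico hb]
    _ = (c : ℝ) - b := sqrt_sub_mul_sqrt_add c.cast_nonneg b.cast_nonneg

lemma eq_of_sqrtSumBin_eq_of_snd_eq (hδ : 0 < δ) (hδA : 8 * δ * √(A : ℝ) ≤ 1) {x y : ℕ × ℕ}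
    (hx : x ∈ dyadicBox A B) (hy : y ∈ dyadicBox A B) (hbin : sqrtSumBin δ x = sqrtSumBin δ y)
    (hsnd : x.2 = y.2) : x = y := by
  have hclose := abs_lt.1 (abs_sqrtSum_sub_lt hδ hbin)
  simp only [sqrtSum, hsnd] at hclose
  have hx1 := (mem_product.1 hx).1
  have hy1 := (mem_product.1 hy).1
  refine Prod.ext (by_contra fun hne => ?_) hsnd
  rcases lt_or_gt_of_ne hne with hlt | hgt
  · linarith [two_mul_le_sqrt_sub_sqrt hx1 hy1 hlt hδA]
  · linarith [two_mul_le_sqrt_sub_sqrt hy1 hx1 hgt hδA]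

lemma card_binCoincidences_fiber_le {b h : ℕ} (hA : 0 < A) (hδ : 0 < δ)
    (hδB : 8 * δ * √(B : ℝ) ≤ 1) (hh : 0 < h) (hb : b ∈ Ico B (2 * B)) :
    (#{z ∈ binCoincidences A B δ h | z.1.2 = b} : ℝ) ≤
      9 / 2 * (h / (2 * √(B : ℝ))) * √(A : ℝ) + 162 * δ * A * √(A : ℝ) := by
  rcases {z ∈ binCoincidences A B δ h | z.1.2 = b}.eq_empty_or_nonempty with hempty | ⟨z₀, hz₀⟩
  · rw [hempty, card_empty, Nat.cast_zero]
    positivity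
  simp only [binCoincidences, mem_filter, mem_product, dyadicBox] at hz₀
  have hbh : b + h ∈ Ico B (2 * B) := by
    rw [← hz₀.2, ← hz₀.1.2.2]
    exact hz₀.1.1.2.2
  set v := √((b + h : ℕ) : ℝ) - √(b : ℝ)
  have hv : v ≤ h / (2 * √(B : ℝ)) := by
    have hB : 0 < B := by have := mem_Ico.1 hb; lia
    simpa only [v, Nat.cast_add, add_sub_cancel_left] using
      sqrt_sub_sqrt_le hB hb (Nat.le_add_right b h)
  have hmaps : ∀ z ∈ {z ∈ binCoincidences A B δ h | z.1.2 = b},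
      (z.1.1, z.2.1) ∈ sqrtDiffPairs A δ v := fun z hz => by
    obtain ⟨⟨⟨hx, hy⟩, hbin, hh⟩, rfl⟩ :
        ((z.1 ∈ dyadicBox A B ∧ z.2 ∈ dyadicBox A B) ∧ _ ∧ z.2.2 = z.1.2 + h) ∧ z.1.2 = b := by
      simpa only [binCoincidences, mem_filter, mem_product (s := dyadicBox A B)] using hz
    refine mem_filter.2 ⟨mem_product.2 ⟨(mem_product.1 hx).1, (mem_product.1 hy).1⟩, ?_⟩
    convert abs_sqrtSum_sub_lt hδ hbin using 2
    simp only [v, sqrtSum, hh]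
    ring
  have hinj : Set.InjOn (fun z : (ℕ × ℕ) × (ℕ × ℕ) => (z.1.1, z.2.1))
      ({z ∈ binCoincidences A B δ h | z.1.2 = b} : Finset _) := by
    rintro ⟨⟨a, b₁⟩, ⟨c, d⟩⟩ hz ⟨⟨a', b₁'⟩, ⟨c', d'⟩⟩ hz' heq
    simp only [binCoincidences, mem_coe, mem_filter] at hz hz'
    simp only [Prod.mk.injEq] at heq ⊢
    lia
  calc (#{z ∈ binCoincidences A B δ h | z.1.2 = b} : ℝ) ≤ #(sqrtDiffPairs A δ v) := by
        exact_mod_cast card_le_card_of_injOn _ hmaps hinj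
    _ ≤ 9 / 2 * v * √(A : ℝ) + 162 * δ * A * √(A : ℝ) :=
        card_sqrtDiffPairs_le hA hδ
          (two_mul_le_sqrt_sub_sqrt hb hbh (Nat.lt_add_of_pos_right hh) hδB)
    _ ≤ 9 / 2 * (h / (2 * √(B : ℝ))) * √(A : ℝ) + 162 * δ * A * √(A : ℝ) := by gcongr

lemma card_binCoincidences_le {h : ℕ} (hB : 0 < B) (hBA : B ≤ A) (hδ : 0 < δ)
    (hδB : 8 * δ * √(B : ℝ) ≤ 1) (hh : 0 < h) :
    (#(binCoincidences A B δ h) : ℝ) ≤ 9 / 4 * h * A + 162 * δ * A * √(A : ℝ) * B := by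
  have hmaps : ∀ z ∈ binCoincidences A B δ h, z.1.2 ∈ Ico B (2 * B) := fun z hz =>
    (mem_product.1 (mem_product.1 (mem_filter.1 hz).1).1).2
  have : 0 < √(B : ℝ) := sqrt_pos.2 (by exact_mod_cast hB)
  calc (#(binCoincidences A B δ h) : ℝ)
      = ∑ b ∈ Ico B (2 * B), (#{z ∈ binCoincidences A B δ h | z.1.2 = b} : ℝ) := by
        exact_mod_cast card_eq_sum_card_fiberwise hmaps
    _ ≤ ∑ _b ∈ Ico B (2 * B),
          (9 / 2 * (h / (2 * √(B : ℝ))) * √(A : ℝ) + 162 * δ * A * √(A : ℝ)) :=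
        sum_le_sum fun b hb => card_binCoincidences_fiber_le (hB.trans_le hBA) hδ hδB hh hb
    _ = B * (9 / 2 * (h / (2 * √(B : ℝ))) * √(A : ℝ) + 162 * δ * A * √(A : ℝ)) := by
        rw [sum_const, nsmul_eq_mul, Nat.card_Ico, two_mul, Nat.add_sub_cancel]
    _ = 9 / 4 * h * (√(A : ℝ) * √(B : ℝ)) + 162 * δ * A * √(A : ℝ) * B := by
        field_simp
        linear_combination -(36 * h * √(A : ℝ)) * mul_self_sqrt B.cast_nonneg
    _ ≤ 9 / 4 * h * A + 162 * δ * A * √(A : ℝ) * B := by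
        gcongr; exact sqrt_mul_sqrt_le hBA

end SqrtSumBins

section ThirdMoment

variable {α β : Type*} [DecidableEq β] {P : Finset α}

lemma fiberMoment_three_le_of_mem_Ico {f : α → β} {h : α → ℕ} {B : ℕ}
    (hB : ∀ x ∈ P, h x ∈ Ico B (2 * B))
    (hinj : ∀ x ∈ P, ∀ y ∈ P, f x = f y → h x = h y → x = y) :
    (fiberMoment 3 P f : ℝ) ≤ 9 * #P + 96 * (B : ℝ) ^ 2 *
      ∑ z ∈ P ×ˢ P with f z.1 = f z.2 ∧ h z.1 < h z.2, 1 / ((h z.2 - h z.1 : ℕ) : ℝ) ^ 2 := by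
  set Z := {z ∈ P ×ˢ P | f z.1 = f z.2 ∧ h z.1 < h z.2}
  let S : β → Finset ℕ := fun d => {x ∈ P | f x = d}.image h
  have hinjOn (d : β) : Set.InjOn h ({x ∈ P | f x = d} : Finset α) := fun x hx y hy => by
    rw [mem_coe, mem_filter] at hx hy
    exact hinj x hx.1 y hy.1 (hx.2.trans hy.2.symm)
  have hcard (d : β) : #(S d) = fiberCard P f d := card_image_of_injOn (hinjOn d)
  have hS (d : β) : S d ⊆ Ico B (2 * B) :=
    image_subset_iff.2 fun x hx => hB x (mem_filter.1 hx).1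
  have hsum (d : β) : ∑ w ∈ S d ×ˢ S d with w.1 < w.2, 1 / ((w.2 - w.1 : ℕ) : ℝ) ^ 2 =
      ∑ z ∈ Z with f z.1 = d, 1 / ((h z.2 - h z.1 : ℕ) : ℝ) ^ 2 := by
    simp only [S, Z, sum_filter, sum_product, ite_and]
    rw [sum_image (hinjOn d), sum_filter]
    refine sum_congr rfl fun x _ => ?_
    split_ifs with hx
    · rw [sum_image (hinjOn d), sum_filter]
      exact sum_congr rfl fun y _ => by simp only [hx, eq_comm]
    · simp only [ite_self, sum_const_zero]
  calc (fiberMoment 3 P f : ℝ) = ∑ d ∈ P.image f, (#(S d) : ℝ) ^ 3 := by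
        simp only [fiberMoment, hcard, Nat.cast_sum, Nat.cast_pow]
    _ ≤ ∑ d ∈ P.image f, (9 * #(S d) + 96 * (B : ℝ) ^ 2 *
          ∑ z ∈ Z with f z.1 = d, 1 / ((h z.2 - h z.1 : ℕ) : ℝ) ^ 2) :=
        sum_le_sum fun d _ => (card_cube_le_sum_inv_sq (hS d)).trans_eq (by rw [hsum])
    _ = 9 * #P + 96 * (B : ℝ) ^ 2 * ∑ z ∈ Z, 1 / ((h z.2 - h z.1 : ℕ) : ℝ) ^ 2 := by
        rw [sum_add_distrib, ← mul_sum, ← mul_sum, sum_fiberwise_of_maps_to fun z hz =>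
          mem_image_of_mem f (mem_product.1 (mem_filter.1 hz).1).1, ← fiberMoment_one f]
        simp only [fiberMoment, hcard, pow_one, Nat.cast_sum, Z]

end ThirdMoment

section SqrtSumMoments

variable {A B : ℕ} {δ : ℝ}

lemma mul_sqrt_le_one_of_le (hδ : 0 < δ) (hBA : B ≤ A) (hδA : 8 * δ * √(A : ℝ) ≤ 1) :
    8 * δ * √(B : ℝ) ≤ 1 :=
  calc 8 * δ * √(B : ℝ) ≤ 8 * δ * √(A : ℝ) := by gcongr
    _ ≤ 1 := hδA

lemma snd_mem_Ico {x : ℕ × ℕ} (hx : x ∈ dyadicBox A B) : x.2 ∈ Ico B (2 * B) :=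
  (mem_product.1 hx).2

lemma card_bin_eq_lt_add_le (A B L : ℕ) (δ : ℝ) :
    #{z ∈ dyadicBox A B ×ˢ dyadicBox A B |
      sqrtSumBin δ z.1 = sqrtSumBin δ z.2 ∧ z.1.2 < z.2.2 ∧ z.2.2 < z.1.2 + L} ≤
      ∑ h ∈ Ico 1 L, #(binCoincidences A B δ h) := by
  refine (card_le_card fun z hz => ?_).trans card_biUnion_le
  obtain ⟨hzP, hbin, hlt, hltL⟩ := mem_filter.1 hz
  exact mem_biUnion.2 ⟨z.2.2 - z.1.2, mem_Ico.2 (by lia),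
    mem_filter.2 ⟨hzP, hbin, (Nat.add_sub_of_le hlt.le).symm⟩⟩

lemma sum_inv_sq_bin_eq_le (A B : ℕ) (δ : ℝ) :
    ∑ z ∈ dyadicBox A B ×ˢ dyadicBox A B with
        sqrtSumBin δ z.1 = sqrtSumBin δ z.2 ∧ z.1.2 < z.2.2, 1 / ((z.2.2 - z.1.2 : ℕ) : ℝ) ^ 2 ≤
      ∑ h ∈ Icc 1 B, #(binCoincidences A B δ h) / (h : ℝ) ^ 2 := by
  rw [← sum_fiberwise_of_maps_to (g := fun z => z.2.2 - z.1.2) (t := Icc 1 B) fun z hz => by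
    obtain ⟨hzP, -, hlt⟩ := mem_filter.1 hz
    have h₁ := mem_Ico.1 (snd_mem_Ico (mem_product.1 hzP).1)
    have h₂ := mem_Ico.1 (snd_mem_Ico (mem_product.1 hzP).2)
    exact mem_Icc.2 (by lia)]
  refine sum_le_sum fun h _ => ?_
  rw [sum_congr rfl fun z hz => by rw [(mem_filter.1 hz).2], sum_const, nsmul_eq_mul,
    mul_one_div]
  gcongr
  refine fun z hz => ?_
  obtain ⟨⟨hzP, hbin, hlt⟩, rfl⟩ : (_ ∧ _ ∧ z.1.2 < z.2.2) ∧ z.2.2 - z.1.2 = h := by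
    simpa only [mem_filter] using hz
  exact mem_filter.2 ⟨hzP, hbin, (Nat.add_sub_of_le hlt.le).symm⟩

lemma fiberMoment_two_sqrtSumBin_le_sum (hB : 0 < B) (hδ : 0 < δ) (hδA : 8 * δ * √(A : ℝ) ≤ 1) :
    fiberMoment 2 (dyadicBox A B) (sqrtSumBin δ) ≤
      5 * B.sqrt * (A * B + 2 * ∑ h ∈ Ico 1 B.sqrt, #(binCoincidences A B δ h)) := by
  have hL : 0 < B.sqrt := Nat.sqrt_pos.2 hB
  have hblocks : B / B.sqrt + 2 ≤ 5 * B.sqrt := by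
    have : B / B.sqrt < B.sqrt + 3 := Nat.div_lt_of_lt_mul (by linarith [Nat.sqrt_le_add B])
    lia
  refine (fiberMoment_two_le_of_mem_Ico hL (fun _ => snd_mem_Ico) fun _ hx _ hy =>
    eq_of_sqrtSumBin_eq_of_snd_eq hδ hδA hx hy).trans ?_
  rw [card_dyadicBox]
  gcongr
  exact card_bin_eq_lt_add_le A B B.sqrt δ

lemma sum_card_binCoincidences_le (hB : 0 < B) (hBA : B ≤ A) (hδ : 0 < δ)
    (hδB : 8 * δ * √(B : ℝ) ≤ 1) :
    ∑ h ∈ Ico 1 B.sqrt, (#(binCoincidences A B δ h) : ℝ) ≤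
      √(B : ℝ) * (9 / 4 * √(B : ℝ) * A + 162 * δ * A * √(A : ℝ) * B) := by
  have hsqrt : (B.sqrt : ℝ) ≤ √(B : ℝ) := le_sqrt_of_sq_le (by exact_mod_cast Nat.sqrt_le' B)
  calc ∑ h ∈ Ico 1 B.sqrt, (#(binCoincidences A B δ h) : ℝ)
      ≤ ∑ _h ∈ Ico 1 B.sqrt, (9 / 4 * √(B : ℝ) * A + 162 * δ * A * √(A : ℝ) * B) := by
        refine sum_le_sum fun h hh => ?_
        obtain ⟨hpos, hhL⟩ := mem_Ico.1 hh
        have : (h : ℝ) ≤ √(B : ℝ) := hsqrt.trans' (by exact_mod_cast hhL.le)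
        refine (card_binCoincidences_le hB hBA hδ hδB hpos).trans ?_
        gcongr
    _ ≤ √(B : ℝ) * (9 / 4 * √(B : ℝ) * A + 162 * δ * A * √(A : ℝ) * B) := by
        rw [sum_const, nsmul_eq_mul, Nat.card_Ico]
        gcongr
        exact hsqrt.trans' (by exact_mod_cast Nat.sub_le B.sqrt 1)

lemma fiberMoment_two_sqrtSumBin_le (hB : 0 < B) (hBA : B ≤ A) (hδ : 0 < δ)
    (hδA : 8 * δ * √(A : ℝ) ≤ 1) :
    (fiberMoment 2 (dyadicBox A B) (sqrtSumBin δ) : ℝ) ≤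
      A * (B * √(B : ℝ)) * (28 + 1620 * δ * A) := by
  have hsqrt : (B.sqrt : ℝ) ≤ √(B : ℝ) := le_sqrt_of_sq_le (by exact_mod_cast Nat.sqrt_le' B)
  calc (fiberMoment 2 (dyadicBox A B) (sqrtSumBin δ) : ℝ)
      ≤ 5 * B.sqrt * (A * B + 2 * ∑ h ∈ Ico 1 B.sqrt, (#(binCoincidences A B δ h) : ℝ)) := by
        exact_mod_cast fiberMoment_two_sqrtSumBin_le_sum hB hδ hδA
    _ ≤ 5 * √(B : ℝ) * (A * B +
          2 * (√(B : ℝ) * (9 / 4 * √(B : ℝ) * A + 162 * δ * A * √(A : ℝ) * B))) := by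
        gcongr
        exact sum_card_binCoincidences_le hB hBA hδ (mul_sqrt_le_one_of_le hδ hBA hδA)
    _ = 5 * √(B : ℝ) * (A * B + 9 / 2 * A * (√(B : ℝ) * √(B : ℝ)) +
          324 * δ * A * (√(A : ℝ) * √(B : ℝ)) * B) := by ring
    _ ≤ 5 * √(B : ℝ) * (A * B + 9 / 2 * A * B + 324 * δ * A * A * B) := by
        rw [mul_self_sqrt B.cast_nonneg]
        gcongr
        exact sqrt_mul_sqrt_le hBA
    _ ≤ A * (B * √(B : ℝ)) * (28 + 1620 * δ * A) := by
        have : 0 ≤ A * B * √(B : ℝ) := by positivity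
        linarith

lemma card_binCoincidences_div_sq_le {h : ℕ} (hB : 0 < B) (hBA : B ≤ A) (hδ : 0 < δ)
    (hδA : 8 * δ * √(A : ℝ) ≤ 1) (hδA' : δ * (A * √(A : ℝ)) ≤ 1) (hh : 0 < h) :
    #(binCoincidences A B δ h) / (h : ℝ) ^ 2 ≤ 165 * A * (h : ℝ)⁻¹ := by
  have hBA' : (B : ℝ) ≤ A := by exact_mod_cast hBA
  have hh' : (1 : ℝ) ≤ h := by exact_mod_cast hh
  rw [div_le_iff₀ (by positivity)]
  calc (#(binCoincidences A B δ h) : ℝ)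
      ≤ 9 / 4 * h * A + 162 * δ * A * √(A : ℝ) * B :=
        card_binCoincidences_le hB hBA hδ (mul_sqrt_le_one_of_le hδ hBA hδA) hh
    _ = 9 / 4 * h * A + 162 * (δ * (A * √(A : ℝ))) * B := by ring
    _ ≤ 9 / 4 * h * A + 162 * 1 * (h * A) := by
        gcongr
        nlinarith
    _ ≤ 165 * A * h := by linarith [mul_nonneg h.cast_nonneg (A.cast_nonneg (α := ℝ))]
    _ = 165 * A * (h : ℝ)⁻¹ * (h : ℝ) ^ 2 := by field_simp

lemma fiberMoment_three_sqrtSumBin_le (hB : 0 < B) (hBA : B ≤ A) (hδ : 0 < δ)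
    (hδA : 8 * δ * √(A : ℝ) ≤ 1) (hδA' : δ * (A * √(A : ℝ)) ≤ 1) :
    (fiberMoment 3 (dyadicBox A B) (sqrtSumBin δ) : ℝ) ≤
      15849 * (1 + log B) * (A * (B : ℝ) ^ 2) := by
  have hharmonic : ∑ h ∈ Icc 1 B, (h : ℝ)⁻¹ ≤ 1 + log B := by
    simpa only [harmonic_eq_sum_Icc, Rat.cast_sum, Rat.cast_inv, Rat.cast_natCast] using
      harmonic_le_one_add_log B
  have hsum : ∑ h ∈ Icc 1 B, #(binCoincidences A B δ h) / (h : ℝ) ^ 2 ≤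
      165 * A * (1 + log B) :=
    calc ∑ h ∈ Icc 1 B, #(binCoincidences A B δ h) / (h : ℝ) ^ 2
        ≤ ∑ h ∈ Icc 1 B, 165 * A * (h : ℝ)⁻¹ := sum_le_sum fun h hh =>
          card_binCoincidences_div_sq_le hB hBA hδ hδA hδA' (mem_Icc.1 hh).1
      _ ≤ 165 * A * (1 + log B) := by rw [← mul_sum]; gcongr
  have hB' : (1 : ℝ) ≤ B := by exact_mod_cast hB
  have hlinear : ((A * B : ℕ) : ℝ) ≤ (1 + log B) * (A * (B : ℝ) ^ 2) :=
    calc ((A * B : ℕ) : ℝ) = A * (B : ℝ) := Nat.cast_mul A B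
      _ ≤ A * (B : ℝ) ^ 2 := by gcongr; nlinarith
      _ ≤ (1 + log B) * (A * (B : ℝ) ^ 2) :=
        le_mul_of_one_le_left (by positivity) (by linarith [log_nonneg hB'])
  calc (fiberMoment 3 (dyadicBox A B) (sqrtSumBin δ) : ℝ)
      ≤ 9 * (A * B : ℕ) + 96 * (B : ℝ) ^ 2 *
          ∑ h ∈ Icc 1 B, #(binCoincidences A B δ h) / (h : ℝ) ^ 2 := by
        refine (fiberMoment_three_le_of_mem_Ico (fun _ => snd_mem_Ico) fun _ hx _ hy =>
          eq_of_sqrtSumBin_eq_of_snd_eq hδ hδA hx hy).trans ?_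
        rw [card_dyadicBox]
        gcongr
        exact sum_inv_sq_bin_eq_le A B δ
    _ ≤ 9 * ((1 + log B) * (A * (B : ℝ) ^ 2)) +
          96 * (B : ℝ) ^ 2 * (165 * A * (1 + log B)) := by
        gcongr
    _ = 15849 * (1 + log B) * (A * (B : ℝ) ^ 2) := by ring

end SqrtSumMoments

section SquareCongruences

lemma card_Ico_filter_modEq {m : ℕ} (hm : 0 < m) (a v : ℤ) (e : ℕ) :
    #{x ∈ Ico a (a + e * m) | x ≡ v [ZMOD m]} = e := by
  have hm' : (m : ℚ) ≠ 0 := by positivity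
  have hcard := Int.Ico_filter_modEq_card a (a + e * m) (Int.natCast_pos.2 hm) v
  have hceil : ((a + e * m : ℤ) - v : ℚ) / (m : ℤ) = (a - v : ℚ) / (m : ℤ) + (e : ℤ) := by
    push_cast
    field_simp
    ring
  rw [hceil, Int.ceil_add_intCast] at hcard
  lia

lemma card_ne_zero_dvd_le {m : ℕ} (hm : 0 < m) (n : ℕ) :
    #{s ∈ Icc (-n : ℤ) n | s ≠ 0 ∧ (m : ℤ) ∣ s} ≤ 2 * (n / m) := by
  have hm' : (0 : ℤ) < m := by exact_mod_cast hm
  have hcard : #((Icc (-(n / m : ℕ) : ℤ) (n / m : ℕ)).erase 0) = 2 * (n / m) := by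
    rw [card_erase_of_mem
      (mem_Icc.2 ⟨neg_nonpos.2 (Nat.cast_nonneg _), Nat.cast_nonneg _⟩), Int.card_Icc]
    lia
  rw [← hcard]
  refine card_le_card_of_surjOn (fun k => m * k) fun s hs => ?_
  obtain ⟨hs, hs0, k, rfl⟩ := mem_filter.1 hs
  obtain ⟨hl, hu⟩ := mem_Icc.1 hs
  refine ⟨k, mem_erase.2 ⟨right_ne_zero_of_mul hs0, mem_Icc.2 ⟨?_, ?_⟩⟩, rfl⟩
  · push_cast
    rw [neg_le, Int.le_ediv_iff_mul_le hm']
    linarith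
  · push_cast
    rw [Int.le_ediv_iff_mul_le hm']
    linarith

lemma mul_card_sq_dvd_four_mul_le {e : ℕ} (he : 0 < e) (R : ℕ) :
    e * #{r ∈ Icc (-R : ℤ) R | r ≠ 0 ∧ (e : ℤ) ^ 2 ∣ 4 * r} ≤ 8 * R := by
  have hcard : #{r ∈ Icc (-R : ℤ) R | r ≠ 0 ∧ (e : ℤ) ^ 2 ∣ 4 * r} ≤ 2 * (4 * R / e ^ 2) := by
    refine (card_le_card_of_injOn (4 * ·) (fun r hr => ?_)
      (mul_right_injective₀ four_ne_zero).injOn).trans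
        (card_ne_zero_dvd_le (pow_pos he 2) (4 * R))
    obtain ⟨hr, hr0, hdvd⟩ := mem_filter.1 hr
    obtain ⟨hl, hu⟩ := mem_Icc.1 hr
    exact mem_filter.2 ⟨mem_Icc.2 ⟨by push_cast; linarith, by push_cast; linarith⟩,
      mul_ne_zero four_ne_zero hr0, by exact_mod_cast hdvd⟩
  calc e * #{r ∈ Icc (-R : ℤ) R | r ≠ 0 ∧ (e : ℤ) ^ 2 ∣ 4 * r}
      ≤ e * e * (2 * (4 * R / e ^ 2)) := Nat.mul_le_mul (Nat.le_mul_self e) hcard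
    _ = 2 * (4 * R / e ^ 2 * e ^ 2) := by ring
    _ ≤ 2 * (4 * R) := Nat.mul_le_mul_left 2 (Nat.div_mul_le_self _ _)
    _ = 8 * R := by ring

lemma gcd_sq_dvd_four_mul {g g' : ℕ} {t₀ t₁ r : ℤ} (hg : (g : ℤ) ∣ t₁ - t₀)
    (hg' : (g' : ℤ) ∣ t₁ + t₀) (hr : (g * g' : ℤ) ∣ t₀ ^ 2 - r) : (g.gcd g' : ℤ) ^ 2 ∣ 4 * r := by
  have hgcd : (g.gcd g' : ℤ) ∣ g := by exact_mod_cast g.gcd_dvd_left g'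
  have hgcd' : (g.gcd g' : ℤ) ∣ g' := by exact_mod_cast g.gcd_dvd_right g'
  have htwo : (g.gcd g' : ℤ) ∣ 2 * t₀ := by
    simpa [two_mul] using dvd_sub (hgcd'.trans hg') (hgcd.trans hg)
  have hprod : (g.gcd g' : ℤ) ^ 2 ∣ 4 * (t₀ ^ 2 - r) :=
    ((sq (g.gcd g' : ℤ) ▸ mul_dvd_mul hgcd hgcd').trans hr).mul_left 4
  rw [show 4 * r = (2 * t₀) ^ 2 - 4 * (t₀ ^ 2 - r) by ring]
  exact dvd_sub (pow_dvd_pow_of_dvd htwo 2) hprod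

lemma card_dvd_sub_dvd_add_le {g g' : ℕ} (hg : 0 < g) (hg' : 0 < g') (a t₀ : ℤ) :
    #{t ∈ Ico a (a + (g * g' : ℕ)) | (g : ℤ) ∣ t - t₀ ∧ (g' : ℤ) ∣ t + t₀} ≤ g.gcd g' := by
  rcases Finset.eq_empty_or_nonempty
    {t ∈ Ico a (a + (g * g' : ℕ)) | (g : ℤ) ∣ t - t₀ ∧ (g' : ℤ) ∣ t + t₀} with hempty | ⟨t₁, ht₁⟩
  · exact (card_eq_zero.2 hempty).trans_le (Nat.zero_le _)
  obtain ⟨-, hsub₁, hadd₁⟩ := mem_filter.1 ht₁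
  rw [← card_Ico_filter_modEq (Nat.lcm_pos hg hg') a t₁ (g.gcd g')]
  refine card_le_card fun t ht => ?_
  obtain ⟨ht, hsub, hadd⟩ := mem_filter.1 ht
  refine mem_filter.2 ⟨by rwa [← Nat.cast_mul, Nat.gcd_mul_lcm], Int.modEq_iff_dvd.2 ?_⟩
  have hdvd : (g : ℤ) ∣ t₁ - t := by simpa using dvd_sub hsub₁ hsub
  have hdvd' : (g' : ℤ) ∣ t₁ - t := by simpa using dvd_sub hadd₁ hadd
  rw [Int.natCast_dvd] at hdvd hdvd' ⊢
  exact Nat.lcm_dvd hdvd hdvd'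

lemma card_sq_modEq_le {q : ℕ} (hq : 0 < q) (a r : ℤ) :
    #{t ∈ Ico a (a + q) | t ^ 2 ≡ r [ZMOD q]} ≤
      ∑ g ∈ q.divisorsAntidiagonal with (g.1.gcd g.2 : ℤ) ^ 2 ∣ 4 * r, g.1.gcd g.2 := by
  rcases Finset.eq_empty_or_nonempty {t ∈ Ico a (a + q) | t ^ 2 ≡ r [ZMOD q]} with
    hempty | ⟨t₀, ht₀⟩
  · exact (card_eq_zero.2 hempty).trans_le (Nat.zero_le _)
  have hr₀ : (q : ℤ) ∣ t₀ ^ 2 - r := (mem_filter.1 ht₀).2.symm.dvd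
  let U : ℕ × ℕ → Finset ℤ := fun g =>
    {t ∈ Ico a (a + (g.1 * g.2 : ℕ)) | (g.1 : ℤ) ∣ t - t₀ ∧ (g.2 : ℤ) ∣ t + t₀}
  refine (card_le_card (t := {g ∈ q.divisorsAntidiagonal |
    (g.1.gcd g.2 : ℤ) ^ 2 ∣ 4 * r}.biUnion U) fun t ht => ?_).trans
      (card_biUnion_le.trans (sum_le_sum fun g hg => ?_))
  · obtain ⟨hta, htr⟩ := mem_filter.1 ht
    have hdvd : (q : ℤ) ∣ (t - t₀) * (t + t₀) := by
      rw [show (t - t₀) * (t + t₀) = (t ^ 2 - r) - (t₀ ^ 2 - r) by ring]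
      exact dvd_sub htr.symm.dvd hr₀
    obtain ⟨d, d', hd, hd', hdd'⟩ := exists_dvd_and_dvd_of_dvd_mul hdvd
    have hq' : d.natAbs * d'.natAbs = q := by rw [← Int.natAbs_mul, ← hdd', Int.natAbs_natCast]
    refine mem_biUnion.2 ⟨(d.natAbs, d'.natAbs), mem_filter.2
      ⟨Nat.mem_divisorsAntidiagonal.2 ⟨hq', hq.ne'⟩, ?_⟩, mem_filter.2 ⟨by rwa [hq'], ?_, ?_⟩⟩
    · exact gcd_sq_dvd_four_mul (Int.natAbs_dvd.2 hd) (Int.natAbs_dvd.2 hd')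
        (by rwa [← Nat.cast_mul, hq'])
    · exact Int.natAbs_dvd.2 hd
    · exact Int.natAbs_dvd.2 hd'
  · obtain ⟨hgq, hq0⟩ := Nat.mem_divisorsAntidiagonal.1 (mem_filter.1 hg).1
    rw [← hgq] at hq0
    exact card_dvd_sub_dvd_add_le (Nat.pos_of_ne_zero (left_ne_zero_of_mul hq0))
      (Nat.pos_of_ne_zero (right_ne_zero_of_mul hq0)) a t₀

lemma sum_card_sq_modEq_le {q : ℕ} (hq : 0 < q) (a : ℤ) (R : ℕ) :
    ∑ r ∈ Icc (-R : ℤ) R with r ≠ 0, #{t ∈ Ico a (a + q) | t ^ 2 ≡ r [ZMOD q]} ≤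
      8 * R * #q.divisors :=
  calc ∑ r ∈ Icc (-R : ℤ) R with r ≠ 0, #{t ∈ Ico a (a + q) | t ^ 2 ≡ r [ZMOD q]}
      ≤ ∑ r ∈ Icc (-R : ℤ) R with r ≠ 0, ∑ g ∈ q.divisorsAntidiagonal with
          (g.1.gcd g.2 : ℤ) ^ 2 ∣ 4 * r, g.1.gcd g.2 :=
        sum_le_sum fun r _ => card_sq_modEq_le hq a r
    _ = ∑ g ∈ q.divisorsAntidiagonal,
          g.1.gcd g.2 * #{r ∈ Icc (-R : ℤ) R | r ≠ 0 ∧ (g.1.gcd g.2 : ℤ) ^ 2 ∣ 4 * r} := by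
        simp only [sum_filter _ (fun g : ℕ × ℕ => g.1.gcd g.2)]
        rw [sum_comm]
        refine sum_congr rfl fun g _ => ?_
        rw [← sum_filter, sum_const, filter_filter, smul_eq_mul, mul_comm]
    _ ≤ ∑ _g ∈ q.divisorsAntidiagonal, 8 * R := by
        refine sum_le_sum fun g hg => mul_card_sq_dvd_four_mul_le (Nat.gcd_pos_of_pos_left _ ?_) R
        exact Nat.pos_of_mem_divisors (Nat.fst_mem_divisors_of_mem_antidiagonal hg)
    _ = 8 * R * #q.divisors := by
        rw [sum_const, smul_eq_mul, mul_comm, ← Nat.map_div_right_divisors, card_map]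

lemma card_sq_modEq_pairs_le {q : ℕ} (hq : 0 < q) (Y R : ℕ) :
    #{z ∈ Icc (0 : ℤ) Y ×ˢ Icc (-R : ℤ) R | z.2 ≠ 0 ∧ z.1 ^ 2 ≡ z.2 [ZMOD q]} ≤
      (Y / q + 1) * (8 * R * #q.divisors) := by
  let U : ℕ → Finset (ℤ × ℤ) := fun j =>
    {z ∈ Ico (j * q : ℤ) (j * q + q) ×ˢ {r ∈ Icc (-R : ℤ) R | r ≠ 0} | z.1 ^ 2 ≡ z.2 [ZMOD q]}
  have hU (j : ℕ) : #(U j) ≤ 8 * R * #q.divisors := by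
    refine le_trans (le_of_eq ?_) (sum_card_sq_modEq_le hq (j * q) R)
    simp only [U, card_filter, sum_product_right]
  calc #{z ∈ Icc (0 : ℤ) Y ×ˢ Icc (-R : ℤ) R | z.2 ≠ 0 ∧ z.1 ^ 2 ≡ z.2 [ZMOD q]}
      ≤ #((range (Y / q + 1)).biUnion U) := by
        refine card_le_card fun z hz => ?_
        obtain ⟨hz, hz0, hmod⟩ := mem_filter.1 hz
        obtain ⟨⟨hnonneg, hY⟩, hR⟩ := (mem_product.1 hz).imp_left mem_Icc.1
        lift z.1 to ℕ using hnonneg with t ht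
        have hdiv : t / q * q + t % q = t := Nat.div_add_mod' t q
        refine mem_biUnion.2 ⟨t / q, mem_range.2 (Nat.lt_succ_of_le
          (Nat.div_le_div_right (by exact_mod_cast hY))), mem_filter.2 ⟨mem_product.2
            ⟨mem_Ico.2 ⟨?_, ?_⟩, mem_filter.2 ⟨hR, hz0⟩⟩, by rwa [← ht]⟩⟩
        · rw [← ht]
          exact_mod_cast Nat.div_mul_le_self t q
        · rw [← ht]
          exact_mod_cast (by linarith [Nat.mod_lt t hq] : t < t / q * q + q)
    _ ≤ ∑ j ∈ range (Y / q + 1), #(U j) := card_biUnion_le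
    _ ≤ (Y / q + 1) * (8 * R * #q.divisors) := by
        exact (sum_le_card_nsmul _ _ _ fun j _ => hU j).trans_eq (by rw [card_range, smul_eq_mul])

end SquareCongruences

section NearCoincidences

/-- The difference `√n₁ + √n₂ - √n₃ - √n₄`, with the quadruple encoded as `((n₁, n₂), (n₃, n₄))`. -/
def sqrtDiff (z : (ℕ × ℕ) × (ℕ × ℕ)) : ℝ := sqrtSum z.1 - sqrtSum z.2

/-- The quadruples `nᵢ ∈ [Nᵢ, 2Nᵢ)` with `0 < |√n₁ + √n₂ - √n₃ - √n₄| ≤ δ`, restricted to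
`n₂ ≤ n₁`, `n₄ ≤ n₃ ≤ n₁` by the symmetries of the problem. -/
def nearCoincidences (N₁ N₂ N₃ N₄ : ℕ) (δ : ℝ) : Finset ((ℕ × ℕ) × (ℕ × ℕ)) :=
  {z ∈ dyadicBox N₁ N₂ ×ˢ dyadicBox N₃ N₄ |
    (sqrtDiff z ≠ 0 ∧ |sqrtDiff z| ≤ δ) ∧ z.1.2 ≤ z.1.1 ∧ z.2.2 ≤ z.2.1 ∧ z.2.1 ≤ z.1.1}

variable {N₁ N₂ N₃ N₄ : ℕ} {δ : ℝ} {n₁ n₂ n₃ n₄ : ℕ}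

lemma mem_nearCoincidences : ((n₁, n₂), n₃, n₄) ∈ nearCoincidences N₁ N₂ N₃ N₄ δ ↔
    ((n₁ ∈ Ico N₁ (2 * N₁) ∧ n₂ ∈ Ico N₂ (2 * N₂)) ∧
      n₃ ∈ Ico N₃ (2 * N₃) ∧ n₄ ∈ Ico N₄ (2 * N₄)) ∧
    (sqrtDiff ((n₁, n₂), n₃, n₄) ≠ 0 ∧ |sqrtDiff ((n₁, n₂), n₃, n₄)| ≤ δ) ∧
      n₂ ≤ n₁ ∧ n₄ ≤ n₃ ∧ n₃ ≤ n₁ := by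
  simp only [nearCoincidences, dyadicBox, mem_filter, mem_product]

lemma pos_of_mem_nearCoincidences {z : (ℕ × ℕ) × (ℕ × ℕ)}
    (hz : z ∈ nearCoincidences N₁ N₂ N₃ N₄ δ) : 0 < δ := by
  have hsize := (mem_filter.1 hz).2.1
  exact (abs_pos.2 hsize.1).trans_le hsize.2

lemma pos_fst_of_mem_nearCoincidences {z : (ℕ × ℕ) × (ℕ × ℕ)}
    (hz : z ∈ nearCoincidences N₁ N₂ N₃ N₄ δ) : 0 < N₁ := by
  obtain ⟨⟨n₁, n₂⟩, n₃, n₄⟩ := z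
  have := mem_Ico.1 (mem_nearCoincidences.1 hz).1.1.1
  lia

lemma snd_le_snd_of_mem_nearCoincidences (hδN : 8 * δ * √(N₁ : ℝ) ≤ 1)
    (hz : ((n₁, n₂), n₃, n₄) ∈ nearCoincidences N₁ N₂ N₃ N₄ δ) : n₂ ≤ n₄ := by
  have hδ := pos_of_mem_nearCoincidences hz
  obtain ⟨⟨⟨h₁, -⟩, -⟩, ⟨-, hsize⟩, h₂₁, -, h₃₁⟩ := mem_nearCoincidences.1 hz
  by_contra! hlt
  have hone : (1 : ℝ) ≤ n₂ - n₄ := by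
    have : (n₄ : ℝ) + 1 ≤ n₂ := by exact_mod_cast hlt
    linarith
  have hγα : √(n₃ : ℝ) ≤ √(n₁ : ℝ) := sqrt_le_sqrt (by exact_mod_cast h₃₁)
  have hηβ : √(n₄ : ℝ) ≤ √(n₂ : ℝ) := sqrt_le_sqrt (by exact_mod_cast hlt.le)
  have hβα : √(n₂ : ℝ) ≤ √(n₁ : ℝ) := sqrt_le_sqrt (by exact_mod_cast h₂₁)
  have hgap : √(n₂ : ℝ) - √(n₄ : ℝ) ≤ δ := by
    have := (abs_le.1 hsize).2
    simp only [sqrtDiff, sqrtSum] at this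
    linarith
  have hfactor := sqrt_sub_mul_sqrt_add n₂.cast_nonneg (n₄.cast_nonneg (α := ℝ))
  have : (√(n₂ : ℝ) - √(n₄ : ℝ)) * (√(n₂ : ℝ) + √(n₄ : ℝ)) ≤ δ * (3 * √(N₁ : ℝ)) := by
    gcongr
    linarith [sqrt_le_of_mem_Ico h₁]
  linarith

lemma sqrt_chain_of_mem_nearCoincidences (hN₂ : 0 < N₂) (hδN : 8 * δ * √(N₁ : ℝ) ≤ 1)
    (hz : ((n₁, n₂), n₃, n₄) ∈ nearCoincidences N₁ N₂ N₃ N₄ δ) :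
    1 ≤ √(n₂ : ℝ) ∧ √(n₂ : ℝ) ≤ √(n₄ : ℝ) ∧ √(n₄ : ℝ) ≤ √(n₃ : ℝ) ∧ √(n₃ : ℝ) ≤ √(n₁ : ℝ) := by
  have h₂₄ := snd_le_snd_of_mem_nearCoincidences hδN hz
  obtain ⟨⟨⟨-, h₂⟩, -⟩, -, -, h₄₃, h₃₁⟩ := mem_nearCoincidences.1 hz
  have hone : 1 ≤ n₂ := hN₂.trans_le (mem_Ico.1 h₂).1
  refine ⟨one_le_sqrt.2 ?_, sqrt_le_sqrt ?_, sqrt_le_sqrt ?_, sqrt_le_sqrt ?_⟩ <;> norm_cast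

lemma fst_le_four_mul_of_mem_nearCoincidences (hN₂ : 0 < N₂) (hδN : 8 * δ * √(N₁ : ℝ) ≤ 1)
    (hz : ((n₁, n₂), n₃, n₄) ∈ nearCoincidences N₁ N₂ N₃ N₄ δ) : n₁ ≤ 4 * n₃ := by
  have hδ := pos_of_mem_nearCoincidences hz
  obtain ⟨hβ, hβη, hηγ, hγα⟩ := sqrt_chain_of_mem_nearCoincidences hN₂ hδN hz
  obtain ⟨⟨⟨h₁, -⟩, -⟩, ⟨-, hsize⟩, -⟩ := mem_nearCoincidences.1 hz
  have hδ₁ : δ ≤ 1 := by nlinarith [sqrt_le_of_mem_Ico h₁]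
  have hαγ : √(n₁ : ℝ) ≤ 2 * √(n₃ : ℝ) := by
    have := (abs_le.1 hsize).2
    simp only [sqrtDiff, sqrtSum] at this
    linarith
  have : (n₁ : ℝ) ≤ 4 * n₃ :=
    calc (n₁ : ℝ) = √(n₁ : ℝ) ^ 2 := (sq_sqrt n₁.cast_nonneg).symm
      _ ≤ (2 * √(n₃ : ℝ)) ^ 2 := by gcongr
      _ = 4 * n₃ := by rw [mul_pow, sq_sqrt n₃.cast_nonneg]; norm_num
  exact_mod_cast this

end NearCoincidences

section QuadraticElimination

/-- The trace `p = n₁ + n₃ - n₂ - n₄`, the integer near `2(√(n₁n₃) - √(n₂n₄))` obtained by squaring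
`√n₁ - √n₃ ≈ √n₄ - √n₂`. -/
def elimTrace (z : (ℕ × ℕ) × (ℕ × ℕ)) : ℤ := z.1.1 + z.2.1 - z.1.2 - z.2.2

/-- The integer `t = 4n₁n₃ - p² - 4n₂n₄`, which is close to `4p√(n₂n₄)`: square
`2√(n₁n₃) ≈ p + 2√(n₂n₄)`. -/
def elimCross (z : (ℕ × ℕ) × (ℕ × ℕ)) : ℤ :=
  4 * (z.1.1 * z.2.1) - elimTrace z ^ 2 - 4 * (z.1.2 * z.2.2)

/-- The norm `r = t² - 16p²n₂n₄` of `t - 4p√(n₂n₄)`: a small integer, congruent to `t²` modulo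
`p²`. -/
def elimNorm (z : (ℕ × ℕ) × (ℕ × ℕ)) : ℤ :=
  elimCross z ^ 2 - 16 * elimTrace z ^ 2 * (z.1.2 * z.2.2)

/-- The exact error `e` in `2√(n₁n₃) = p + 2√(n₂n₄) - e`. -/
def elimError (z : (ℕ × ℕ) × (ℕ × ℕ)) : ℝ :=
  2 * sqrtDiff z * (√(z.2.2 : ℝ) - √(z.1.2 : ℝ)) + sqrtDiff z ^ 2

variable {N₁ N₂ N₃ N₄ : ℕ} {δ : ℝ} {z : (ℕ × ℕ) × (ℕ × ℕ)}

lemma two_mul_sqrt_mul_sqrt_eq (z : (ℕ × ℕ) × (ℕ × ℕ)) :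
    2 * (√(z.1.1 : ℝ) * √(z.2.1 : ℝ)) =
      elimTrace z + 2 * (√(z.1.2 : ℝ) * √(z.2.2 : ℝ)) - elimError z := by
  simp only [elimTrace, elimError, sqrtDiff, sqrtSum]
  push_cast
  linear_combination sq_sqrt (z.1.1.cast_nonneg (α := ℝ)) + sq_sqrt (z.2.1.cast_nonneg (α := ℝ)) -
    sq_sqrt (z.1.2.cast_nonneg (α := ℝ)) - sq_sqrt (z.2.2.cast_nonneg (α := ℝ))

lemma elimCross_sub_eq (z : (ℕ × ℕ) × (ℕ × ℕ)) :
    elimCross z - 4 * elimTrace z * (√(z.1.2 : ℝ) * √(z.2.2 : ℝ)) =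
      elimError z * (elimError z - 2 * (elimTrace z + 2 * (√(z.1.2 : ℝ) * √(z.2.2 : ℝ)))) := by
  have hprod (a b : ℕ) : (√(a : ℝ) * √(b : ℝ)) ^ 2 = a * b := by
    rw [mul_pow, sq_sqrt a.cast_nonneg, sq_sqrt b.cast_nonneg]
  have hsq : (2 * (√(z.1.1 : ℝ) * √(z.2.1 : ℝ))) ^ 2 =
      (elimTrace z + 2 * (√(z.1.2 : ℝ) * √(z.2.2 : ℝ)) - elimError z) ^ 2 := by
    rw [two_mul_sqrt_mul_sqrt_eq]
  rw [elimCross]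
  push_cast
  linear_combination hsq - 4 * hprod z.1.1 z.2.1 + 4 * hprod z.1.2 z.2.2

lemma elimNorm_eq (z : (ℕ × ℕ) × (ℕ × ℕ)) :
    (elimNorm z : ℝ) = (elimCross z - 4 * elimTrace z * (√(z.1.2 : ℝ) * √(z.2.2 : ℝ))) *
      (elimCross z + 4 * elimTrace z * (√(z.1.2 : ℝ) * √(z.2.2 : ℝ))) := by
  simp only [elimNorm]
  push_cast
  linear_combination 16 * (elimTrace z : ℝ) ^ 2 * (√(z.2.2 : ℝ) ^ 2 *
    sq_sqrt (z.1.2.cast_nonneg (α := ℝ)) + z.1.2 * sq_sqrt (z.2.2.cast_nonneg (α := ℝ)))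

lemma elimCross_sq_modEq (z : (ℕ × ℕ) × (ℕ × ℕ)) :
    elimCross z ^ 2 ≡ elimNorm z [ZMOD elimTrace z ^ 2] :=
  (Int.modEq_iff_dvd.2 ⟨16 * (z.1.2 * z.2.2), by rw [elimNorm]; ring⟩).symm

lemma mul_eq_mul_of_elim_eq {w : (ℕ × ℕ) × (ℕ × ℕ)} (hz : elimTrace z ≠ 0)
    (htrace : elimTrace w = elimTrace z) (hcross : elimCross w = elimCross z)
    (hnorm : elimNorm w = elimNorm z) :
    w.1.1 * w.2.1 = z.1.1 * z.2.1 ∧ w.1.2 * w.2.2 = z.1.2 * z.2.2 := by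
  rw [elimNorm, elimNorm, hcross, htrace] at hnorm
  have hsnd : (w.1.2 * w.2.2 : ℤ) = z.1.2 * z.2.2 :=
    mul_left_cancel₀ (mul_ne_zero (by norm_num : (16 : ℤ) ≠ 0) (pow_ne_zero 2 hz))
      (by linarith)
  rw [elimCross, elimCross, htrace] at hcross
  have hfst : (w.1.1 * w.2.1 : ℤ) = z.1.1 * z.2.1 := by linarith
  exact ⟨by exact_mod_cast hfst, by exact_mod_cast hsnd⟩

lemma elimTrace_pos (hδN : 8 * δ * √(N₁ : ℝ) ≤ 1) (hz : z ∈ nearCoincidences N₁ N₂ N₃ N₄ δ) :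
    0 < elimTrace z := by
  obtain ⟨⟨n₁, n₂⟩, n₃, n₄⟩ := z
  have h₂₄ := snd_le_snd_of_mem_nearCoincidences hδN hz
  obtain ⟨-, ⟨hne, -⟩, -, h₄₃, h₃₁⟩ := mem_nearCoincidences.1 hz
  rw [elimTrace]
  by_contra! hle
  obtain ⟨rfl, rfl⟩ : n₁ = n₄ ∧ n₃ = n₂ := by lia
  exact hne (by simp only [sqrtDiff, sqrtSum]; ring)

lemma elimTrace_le (hz : z ∈ nearCoincidences N₁ N₂ N₃ N₄ δ) : elimTrace z ≤ 4 * N₁ := by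
  obtain ⟨⟨n₁, n₂⟩, n₃, n₄⟩ := z
  obtain ⟨⟨⟨h₁, -⟩, -⟩, -, -, -, h₃₁⟩ := mem_nearCoincidences.1 hz
  rw [mem_Ico] at h₁
  rw [elimTrace]
  lia

lemma eight_mul_sqrt_le_one (hδ : 0 < δ) (hδN : 200 * δ * (N₁ : ℝ) ^ 2 ≤ 1) :
    8 * δ * √(N₁ : ℝ) ≤ 1 := by
  have hsqrt : √(N₁ : ℝ) ≤ (N₁ : ℝ) ^ 2 := by
    rcases N₁.eq_zero_or_pos with rfl | hpos
    · norm_num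
    · have : (1 : ℝ) ≤ N₁ := by exact_mod_cast hpos
      have hpow : (N₁ : ℝ) ≤ (N₁ : ℝ) ^ 4 := le_self_pow₀ this (by norm_num)
      exact sqrt_le_iff.2 ⟨by positivity, by linarith⟩
  nlinarith [mul_le_mul_of_nonneg_left hsqrt hδ.le, mul_nonneg hδ.le (sq_nonneg (N₁ : ℝ))]

lemma abs_elimError_le (hN₂ : 0 < N₂) (hδN : 8 * δ * √(N₁ : ℝ) ≤ 1)
    (hz : z ∈ nearCoincidences N₁ N₂ N₃ N₄ δ) : |elimError z| ≤ 4 * δ * √(N₄ : ℝ) := by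
  obtain ⟨⟨n₁, n₂⟩, n₃, n₄⟩ := z
  have hδ := pos_of_mem_nearCoincidences hz
  obtain ⟨hβ, hβη, hηγ, hγα⟩ := sqrt_chain_of_mem_nearCoincidences hN₂ hδN hz
  obtain ⟨⟨⟨h₁, -⟩, -, h₄⟩, ⟨-, hsize⟩, -⟩ := mem_nearCoincidences.1 hz
  have hα := sqrt_le_of_mem_Ico h₁
  have hη := sqrt_le_of_mem_Ico h₄
  set Δ := sqrtDiff ((n₁, n₂), n₃, n₄)
  have hδη : δ ≤ √(N₄ : ℝ) := by nlinarith
  calc |elimError ((n₁, n₂), n₃, n₄)| = |2 * Δ * (√(n₄ : ℝ) - √(n₂ : ℝ)) + Δ ^ 2| := rfl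
    _ ≤ |2 * Δ * (√(n₄ : ℝ) - √(n₂ : ℝ))| + |Δ ^ 2| := abs_add_le _ _
    _ = 2 * |Δ| * (√(n₄ : ℝ) - √(n₂ : ℝ)) + |Δ| * |Δ| := by
      rw [abs_mul, abs_mul, abs_two, abs_of_nonneg (sub_nonneg.2 hβη), sq, abs_mul]
    _ ≤ 2 * δ * (3 / 2 * √(N₄ : ℝ)) + δ * √(N₄ : ℝ) := by
      gcongr
      · linarith
      · exact hsize.trans hδη
    _ = 4 * δ * √(N₄ : ℝ) := by ring

lemma sqrt_mul_sqrt_bounds (hN₂ : 0 < N₂) (hδN : 8 * δ * √(N₁ : ℝ) ≤ 1)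
    (hz : z ∈ nearCoincidences N₁ N₂ N₃ N₄ δ) :
    1 ≤ √(z.1.2 : ℝ) * √(z.2.2 : ℝ) ∧
      √(z.1.2 : ℝ) * √(z.2.2 : ℝ) ≤ 2 * (√(N₂ : ℝ) * √(N₄ : ℝ)) := by
  obtain ⟨⟨n₁, n₂⟩, n₃, n₄⟩ := z
  obtain ⟨hβ, hβη, -⟩ := sqrt_chain_of_mem_nearCoincidences hN₂ hδN hz
  obtain ⟨⟨⟨-, h₂⟩, -, h₄⟩, -⟩ := mem_nearCoincidences.1 hz
  refine ⟨one_le_mul_of_one_le_of_one_le hβ (hβ.trans hβη), ?_⟩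
  have hn₂ : (n₂ : ℝ) ≤ 2 * N₂ := by exact_mod_cast (mem_Ico.1 h₂).2.le
  have hn₄ : (n₄ : ℝ) ≤ 2 * N₄ := by exact_mod_cast (mem_Ico.1 h₄).2.le
  calc √(n₂ : ℝ) * √(n₄ : ℝ) ≤ √(2 * N₂) * √(2 * N₄) := by gcongr
    _ = √2 * √2 * (√(N₂ : ℝ) * √(N₄ : ℝ)) := by
      rw [sqrt_mul zero_le_two, sqrt_mul zero_le_two]; ring
    _ = 2 * (√(N₂ : ℝ) * √(N₄ : ℝ)) := by rw [mul_self_sqrt zero_le_two]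

lemma mul_sqrt_lt_one (hδ : 0 < δ) (hN₁ : 0 < N₁) (hN₄ : N₄ ≤ N₁)
    (hδN : 200 * δ * (N₁ : ℝ) ^ 2 ≤ 1) : 68 * δ * N₁ * √(N₄ : ℝ) < 1 := by
  have hN₁' : (1 : ℝ) ≤ N₁ := by exact_mod_cast hN₁
  have hN₄' : (N₄ : ℝ) ≤ N₁ := by exact_mod_cast hN₄
  have hsqrt : √(N₄ : ℝ) ≤ N₁ := sqrt_le_iff.2 ⟨by positivity, by nlinarith⟩
  calc 68 * δ * N₁ * √(N₄ : ℝ) ≤ 68 * δ * N₁ * N₁ := by gcongr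
    _ < 200 * δ * (N₁ : ℝ) ^ 2 := by nlinarith [mul_pos hδ (pow_pos (hN₁'.trans_lt' one_pos) 2)]
    _ ≤ 1 := hδN

lemma abs_elimError_lt_one (hN₂ : 0 < N₂) (hN₄ : N₄ ≤ N₁) (hδN : 200 * δ * (N₁ : ℝ) ^ 2 ≤ 1)
    (hz : z ∈ nearCoincidences N₁ N₂ N₃ N₄ δ) : |elimError z| < 1 := by
  have hδ := pos_of_mem_nearCoincidences hz
  have hN₁ : 0 < N₁ := pos_fst_of_mem_nearCoincidences hz
  have hN₁' : (1 : ℝ) ≤ N₁ := by exact_mod_cast hN₁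
  calc |elimError z| ≤ 4 * δ * √(N₄ : ℝ) :=
        abs_elimError_le hN₂ (eight_mul_sqrt_le_one hδ hδN) hz
    _ ≤ 68 * (δ * √(N₄ : ℝ)) * N₁ := by nlinarith [mul_nonneg hδ.le (sqrt_nonneg (N₄ : ℝ))]
    _ = 68 * δ * N₁ * √(N₄ : ℝ) := by ring
    _ < 1 := mul_sqrt_lt_one hδ hN₁ hN₄ hδN

lemma sqrt_mul_sqrt_le_of_mem_nearCoincidences (hN₂ : 0 < N₂) (hδN : 8 * δ * √(N₁ : ℝ) ≤ 1)
    (hz : z ∈ nearCoincidences N₁ N₂ N₃ N₄ δ) : √(z.1.2 : ℝ) * √(z.2.2 : ℝ) ≤ 2 * N₁ := by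
  obtain ⟨⟨n₁, n₂⟩, n₃, n₄⟩ := z
  obtain ⟨-, hβη, hηγ, hγα⟩ := sqrt_chain_of_mem_nearCoincidences hN₂ hδN hz
  obtain ⟨⟨⟨h₁, -⟩, -⟩, -⟩ := mem_nearCoincidences.1 hz
  calc √(n₂ : ℝ) * √(n₄ : ℝ) ≤ √(n₁ : ℝ) * √(n₁ : ℝ) :=
        mul_le_mul (by linarith) (by linarith) (sqrt_nonneg _) (sqrt_nonneg _)
    _ = n₁ := mul_self_sqrt n₁.cast_nonneg
    _ ≤ 2 * N₁ := by exact_mod_cast (mem_Ico.1 h₁).2.le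

lemma abs_elimCross_sub_le (hN₂ : 0 < N₂) (hN₄ : N₄ ≤ N₁) (hδN : 200 * δ * (N₁ : ℝ) ^ 2 ≤ 1)
    (hz : z ∈ nearCoincidences N₁ N₂ N₃ N₄ δ) :
    |elimCross z - 4 * elimTrace z * (√(z.1.2 : ℝ) * √(z.2.2 : ℝ))| ≤
      68 * δ * N₁ * √(N₄ : ℝ) := by
  have hδ := pos_of_mem_nearCoincidences hz
  have hδN' := eight_mul_sqrt_le_one hδ hδN
  have hN₁ : (1 : ℝ) ≤ N₁ := by exact_mod_cast pos_fst_of_mem_nearCoincidences hz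
  have hpos : (0 : ℝ) < elimTrace z := by exact_mod_cast elimTrace_pos hδN' hz
  have htrace : (elimTrace z : ℝ) ≤ 4 * N₁ := by exact_mod_cast elimTrace_le hz
  have hprod := sqrt_mul_sqrt_le_of_mem_nearCoincidences hN₂ hδN' hz
  have hone := (sqrt_mul_sqrt_bounds hN₂ hδN' hz).1
  have herror := abs_lt.1 (abs_elimError_lt_one hN₂ hN₄ hδN hz)
  rw [elimCross_sub_eq, abs_mul]
  calc _ ≤ 4 * δ * √(N₄ : ℝ) * (17 * N₁) := by
        gcongr
        · exact abs_elimError_le hN₂ hδN' hz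
        · exact abs_le.2 ⟨by linarith, by linarith⟩
    _ = 68 * δ * N₁ * √(N₄ : ℝ) := by ring

lemma elimError_ne_zero (hN₂ : 0 < N₂) (hδN : 8 * δ * √(N₁ : ℝ) ≤ 1)
    (hz : z ∈ nearCoincidences N₁ N₂ N₃ N₄ δ) : elimError z ≠ 0 := by
  obtain ⟨⟨n₁, n₂⟩, n₃, n₄⟩ := z
  have hδ := pos_of_mem_nearCoincidences hz
  have h₂₄ := snd_le_snd_of_mem_nearCoincidences hδN hz
  obtain ⟨hβ, hβη, hηγ, hγα⟩ := sqrt_chain_of_mem_nearCoincidences hN₂ hδN hz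
  obtain ⟨⟨⟨h₁, -⟩, -⟩, ⟨hne, hsize⟩, -⟩ := mem_nearCoincidences.1 hz
  have hα := sqrt_le_of_mem_Ico h₁
  set Δ := sqrtDiff ((n₁, n₂), n₃, n₄)
  intro hzero
  replace hzero : Δ * (2 * (√(n₄ : ℝ) - √(n₂ : ℝ)) + Δ) = 0 := by
    rw [← hzero, elimError]; ring
  have hgap := (mul_eq_zero.1 hzero).resolve_left hne
  rcases h₂₄.eq_or_lt with rfl | hlt
  · exact hne (by linarith)
  have hone : (1 : ℝ) ≤ n₄ - n₂ := by
    have : (n₂ : ℝ) + 1 ≤ n₄ := by exact_mod_cast hlt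
    linarith
  have hfactor := sqrt_sub_mul_sqrt_add n₄.cast_nonneg (n₂.cast_nonneg (α := ℝ))
  have : (√(n₄ : ℝ) - √(n₂ : ℝ)) * (√(n₄ : ℝ) + √(n₂ : ℝ)) ≤ δ * (3 * √(N₁ : ℝ)) := by
    gcongr
    · linarith [(abs_le.1 hsize).1]
    · linarith
  linarith

lemma elimNorm_ne_zero (hN₂ : 0 < N₂) (hN₄ : N₄ ≤ N₁) (hδN : 200 * δ * (N₁ : ℝ) ^ 2 ≤ 1)
    (hz : z ∈ nearCoincidences N₁ N₂ N₃ N₄ δ) : elimNorm z ≠ 0 := by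
  have hδ := pos_of_mem_nearCoincidences hz
  have hδN' := eight_mul_sqrt_le_one hδ hδN
  have htrace : (1 : ℝ) ≤ elimTrace z := by exact_mod_cast elimTrace_pos hδN' hz
  have hone := (sqrt_mul_sqrt_bounds hN₂ hδN' hz).1
  have herror := abs_lt.1 (abs_elimError_lt_one hN₂ hN₄ hδN hz)
  have hcross := abs_lt.1 ((abs_elimCross_sub_le hN₂ hN₄ hδN hz).trans_lt
    (mul_sqrt_lt_one hδ (pos_fst_of_mem_nearCoincidences hz) hN₄ hδN))
  have hmul := one_le_mul_of_one_le_of_one_le htrace hone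
  refine Int.cast_ne_zero (α := ℝ).1 ?_
  rw [elimNorm_eq]
  refine mul_ne_zero ?_ (by nlinarith)
  rw [elimCross_sub_eq]
  exact mul_ne_zero (elimError_ne_zero hN₂ hδN' hz) (by linarith)

lemma abs_elimNorm_le (hN₂ : 0 < N₂) (hN₄ : N₄ ≤ N₁) (hδN : 200 * δ * (N₁ : ℝ) ^ 2 ≤ 1)
    (hz : z ∈ nearCoincidences N₁ N₂ N₃ N₄ δ) :
    |(elimNorm z : ℝ)| ≤
      18 * (68 * δ * N₁ * √(N₄ : ℝ)) * elimTrace z * (√(N₂ : ℝ) * √(N₄ : ℝ)) := by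
  have hδ := pos_of_mem_nearCoincidences hz
  have hδN' := eight_mul_sqrt_le_one hδ hδN
  have htrace : (1 : ℝ) ≤ elimTrace z := by exact_mod_cast elimTrace_pos hδN' hz
  obtain ⟨hone, hprod⟩ := sqrt_mul_sqrt_bounds hN₂ hδN' hz
  have hcross := abs_elimCross_sub_le hN₂ hN₄ hδN hz
  have hcross' := abs_lt.1 (hcross.trans_lt
    (mul_sqrt_lt_one hδ (pos_fst_of_mem_nearCoincidences hz) hN₄ hδN))
  have hmul := one_le_mul_of_one_le_of_one_le htrace hone
  set x := √(z.1.2 : ℝ) * √(z.2.2 : ℝ)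
  rw [elimNorm_eq, abs_mul]
  calc _ ≤ 68 * δ * N₁ * √(N₄ : ℝ) * (9 * (elimTrace z * x)) := by
        gcongr
        exact abs_le.2 ⟨by linarith, by linarith⟩
    _ ≤ 68 * δ * N₁ * √(N₄ : ℝ) * (9 * (elimTrace z * (2 * (√(N₂ : ℝ) * √(N₄ : ℝ))))) := by gcongr
    _ = _ := by ring

lemma elimCross_bounds (hN₂ : 0 < N₂) (hN₄ : N₄ ≤ N₁) (hδN : 200 * δ * (N₁ : ℝ) ^ 2 ≤ 1)
    (hz : z ∈ nearCoincidences N₁ N₂ N₃ N₄ δ) :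
    0 ≤ elimCross z ∧
      (elimCross z : ℝ) ≤ 8 * elimTrace z * (√(N₂ : ℝ) * √(N₄ : ℝ)) + 1 := by
  have hδ := pos_of_mem_nearCoincidences hz
  have hδN' := eight_mul_sqrt_le_one hδ hδN
  have htrace : (1 : ℝ) ≤ elimTrace z := by exact_mod_cast elimTrace_pos hδN' hz
  obtain ⟨hone, hprod⟩ := sqrt_mul_sqrt_bounds hN₂ hδN' hz
  have hcross := abs_lt.1 ((abs_elimCross_sub_le hN₂ hN₄ hδN hz).trans_lt
    (mul_sqrt_lt_one hδ (pos_fst_of_mem_nearCoincidences hz) hN₄ hδN))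
  have hmul := one_le_mul_of_one_le_of_one_le htrace hone
  have hmul' := mul_le_mul_of_nonneg_left hprod (zero_le_one.trans htrace)
  refine ⟨?_, by linarith⟩
  have : (-1 : ℝ) < elimCross z := by linarith
  have : -1 < elimCross z := by exact_mod_cast this
  lia

end QuadraticElimination

section EliminationCount

variable {N₁ N₂ N₃ N₄ : ℕ} {δ : ℝ} {z : (ℕ × ℕ) × (ℕ × ℕ)}

lemma card_elim_eq_le (hN₂ : 0 < N₂) (hδN : 8 * δ * √(N₁ : ℝ) ≤ 1)
    (hz : z ∈ nearCoincidences N₁ N₂ N₃ N₄ δ) :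
    #{w ∈ nearCoincidences N₁ N₂ N₃ N₄ δ | elimTrace w = elimTrace z ∧
        elimCross w = elimCross z ∧ elimNorm w = elimNorm z} ≤
      #(z.1.1 * z.2.1).divisors * #(z.1.2 * z.2.2).divisors := by
  have hpos : ∀ w ∈ nearCoincidences N₁ N₂ N₃ N₄ δ,
      0 < w.1.1 ∧ 0 < w.1.2 ∧ 0 < w.2.1 ∧ 0 < w.2.2 := by
    rintro ⟨⟨n₁, n₂⟩, n₃, n₄⟩ hw
    have h₂₄ := snd_le_snd_of_mem_nearCoincidences hδN hw
    obtain ⟨⟨⟨-, h₂⟩, -⟩, -, h₂₁, h₄₃, -⟩ := mem_nearCoincidences.1 hw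
    have := (mem_Ico.1 h₂).1
    dsimp only
    lia
  have htrace := (elimTrace_pos hδN hz).ne'
  obtain ⟨h₁, h₂, h₃, h₄⟩ := hpos z hz
  rw [← card_product]
  refine card_le_card_of_injOn (fun w => (w.1.1, w.1.2)) (fun w hw => ?_) fun w hw v hv hwv => ?_
  · obtain ⟨-, hp, ht, hr⟩ := mem_filter.1 hw
    obtain ⟨hfst, hsnd⟩ := mul_eq_mul_of_elim_eq htrace hp ht hr
    exact mem_product.2 ⟨Nat.mem_divisors.2 ⟨⟨_, hfst.symm⟩, by positivity⟩,
      Nat.mem_divisors.2 ⟨⟨_, hsnd.symm⟩, by positivity⟩⟩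
  · obtain ⟨hwS, hp, ht, hr⟩ := mem_filter.1 hw
    obtain ⟨hfst, hsnd⟩ := mul_eq_mul_of_elim_eq htrace hp ht hr
    obtain ⟨-, hp', ht', hr'⟩ := mem_filter.1 hv
    obtain ⟨hfst', hsnd'⟩ := mul_eq_mul_of_elim_eq htrace hp' ht' hr'
    obtain ⟨h₁', h₂', -⟩ := hpos w hwS
    obtain ⟨hwv₁, hwv₂⟩ := Prod.ext_iff.1 hwv
    rw [← hfst', ← hwv₁] at hfst
    rw [← hsnd', ← hwv₂] at hsnd
    exact Prod.ext (Prod.ext hwv₁ hwv₂) (Prod.ext (Nat.eq_of_mul_eq_mul_left h₁' hfst)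
      (Nat.eq_of_mul_eq_mul_left h₂' hsnd))

lemma card_image_elim_le (hN₂ : 0 < N₂) (hN₄ : N₄ ≤ N₁) (hδN : 200 * δ * (N₁ : ℝ) ^ 2 ≤ 1) {p : ℕ}
    (hp : 0 < p) :
    #(image (fun z => (elimCross z, elimNorm z))
        {z ∈ nearCoincidences N₁ N₂ N₃ N₄ δ | elimTrace z = p}) ≤
      (⌊8 * p * (√(N₂ : ℝ) * √(N₄ : ℝ)) + 1⌋₊ / p ^ 2 + 1) *
        (8 * ⌊18 * (68 * δ * N₁ * √(N₄ : ℝ)) * p * (√(N₂ : ℝ) * √(N₄ : ℝ))⌋₊ *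
          #(p ^ 2).divisors) := by
  refine le_trans (card_le_card ?_) (card_sq_modEq_pairs_le (pow_pos hp 2) _ _)
  intro x hx
  obtain ⟨z, hz, rfl⟩ := mem_image.1 hx
  obtain ⟨hz, htrace⟩ := mem_filter.1 hz
  have hmod := elimCross_sq_modEq z
  obtain ⟨hnonneg, hcross⟩ := elimCross_bounds hN₂ hN₄ hδN hz
  have hnorm := abs_elimNorm_le hN₂ hN₄ hδN hz
  simp only [htrace, Int.cast_natCast] at hcross hnorm hmod
  have hcross' : elimCross z ≤ ⌊8 * (p : ℝ) * (√(N₂ : ℝ) * √(N₄ : ℝ)) + 1⌋₊ := by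
    rw [Int.natCast_floor_eq_floor (by positivity)]
    exact Int.le_floor.2 hcross
  have hnorm' : |elimNorm z| ≤
      ⌊18 * (68 * δ * N₁ * √(N₄ : ℝ)) * p * (√(N₂ : ℝ) * √(N₄ : ℝ))⌋₊ := by
    rw [Int.natCast_floor_eq_floor (hnorm.trans' (abs_nonneg _))]
    exact Int.le_floor.2 (by exact_mod_cast hnorm)
  exact mem_filter.2 ⟨mem_product.2 ⟨mem_Icc.2 ⟨hnonneg, hcross'⟩, mem_Icc.2 (abs_le.1 hnorm')⟩,
    elimNorm_ne_zero hN₂ hN₄ hδN hz, by exact_mod_cast hmod⟩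

variable {D : ℝ}

lemma card_image_elim_le_of_divisors_le (hδ : 0 < δ) (hN₂ : 0 < N₂) (hN₂₁ : N₂ ≤ N₁)
    (hN₄ : N₄ ≤ N₁) (hδN : 200 * δ * (N₁ : ℝ) ^ 2 ≤ 1)
    (hD : ∀ k : ℕ, k ≠ 0 → k ≤ 16 * N₁ ^ 2 → (#k.divisors : ℝ) ≤ D) {p : ℕ} (hp : 0 < p)
    (hpN : p ≤ 4 * N₁) :
    (#(image (fun z => (elimCross z, elimNorm z))
        {z ∈ nearCoincidences N₁ N₂ N₃ N₄ δ | elimTrace z = p}) : ℝ) ≤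
      144 * (68 * δ * N₁ * √(N₄ : ℝ)) * (√(N₂ : ℝ) * √(N₄ : ℝ)) * D * (16 * N₁) := by
  have hp1 : (1 : ℝ) ≤ p := by exact_mod_cast hp
  have hpN' : (p : ℝ) ≤ 4 * N₁ := by exact_mod_cast hpN
  have hN₁ : (1 : ℝ) ≤ N₁ := by exact_mod_cast hN₂.trans_le hN₂₁
  have hD0 : 0 ≤ D := (Nat.cast_nonneg _).trans (hD 1 one_ne_zero (by nlinarith))
  have hsN : √(N₂ : ℝ) * √(N₄ : ℝ) ≤ N₁ :=
    calc √(N₂ : ℝ) * √(N₄ : ℝ) ≤ √(N₁ : ℝ) * √(N₁ : ℝ) := by gcongr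
      _ = N₁ := mul_self_sqrt N₁.cast_nonneg
  set s := √(N₂ : ℝ) * √(N₄ : ℝ)
  set κ := 68 * δ * N₁ * √(N₄ : ℝ)
  have hdiv : (#(p ^ 2).divisors : ℝ) ≤ D := hD _ (by positivity) (by nlinarith)
  calc _ ≤ (((⌊8 * p * s + 1⌋₊ / p ^ 2 : ℕ) : ℝ) + 1) *
        (8 * (⌊18 * κ * p * s⌋₊ : ℝ) * #(p ^ 2).divisors) := by
        exact_mod_cast card_image_elim_le hN₂ hN₄ hδN hp
    _ ≤ ((8 * p * s + 1) / (p : ℝ) ^ 2 + 1) * (8 * (18 * κ * p * s) * D) := by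
        gcongr
        · refine Nat.cast_div_le.trans ?_
          push_cast
          gcongr
          exact Nat.floor_le (by positivity)
        · exact Nat.floor_le (by positivity)
    _ = 144 * κ * s * D * (8 * s + 1 / p + p) := by field_simp; ring
    _ ≤ 144 * κ * s * D * (16 * N₁) := by
        have : 1 / (p : ℝ) ≤ 1 := (div_le_one (by linarith)).2 hp1
        gcongr
        linarith

lemma card_elim_eq_le_sq (hN₂ : 0 < N₂) (hδN : 8 * δ * √(N₁ : ℝ) ≤ 1)
    (hD : ∀ k : ℕ, k ≠ 0 → k ≤ 16 * N₁ ^ 2 → (#k.divisors : ℝ) ≤ D)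
    (hz : z ∈ nearCoincidences N₁ N₂ N₃ N₄ δ) :
    #{w ∈ nearCoincidences N₁ N₂ N₃ N₄ δ | elimTrace w = elimTrace z ∧
        elimCross w = elimCross z ∧ elimNorm w = elimNorm z} ≤ ⌊D ^ 2⌋₊ := by
  refine (card_elim_eq_le hN₂ hδN hz).trans (Nat.le_floor ?_)
  obtain ⟨⟨n₁, n₂⟩, n₃, n₄⟩ := z
  have h₂₄ := snd_le_snd_of_mem_nearCoincidences hδN hz
  obtain ⟨⟨⟨h₁, h₂⟩, -⟩, -, h₂₁, h₄₃, h₃₁⟩ := mem_nearCoincidences.1 hz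
  rw [mem_Ico] at h₁ h₂
  have hdiv {a b : ℕ} (ha : 0 < a) (hb : 0 < b) (haN : a ≤ 2 * N₁) (hbN : b ≤ 2 * N₁) :
      (#(a * b).divisors : ℝ) ≤ D := hD _ (by positivity) (by nlinarith)
  rw [Nat.cast_mul, sq]
  have hfst : (#(n₁ * n₃).divisors : ℝ) ≤ D := by apply hdiv <;> lia
  have hsnd : (#(n₂ * n₄).divisors : ℝ) ≤ D := by apply hdiv <;> lia
  exact mul_le_mul hfst hsnd (Nat.cast_nonneg _) ((Nat.cast_nonneg _).trans hfst)

lemma card_elimTrace_eq_le (hδ : 0 < δ) (hN₂ : 0 < N₂) (hN₂₁ : N₂ ≤ N₁)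
    (hN₄ : N₄ ≤ N₁) (hδN : 200 * δ * (N₁ : ℝ) ^ 2 ≤ 1)
    (hD : ∀ k : ℕ, k ≠ 0 → k ≤ 16 * N₁ ^ 2 → (#k.divisors : ℝ) ≤ D) {p : ℕ} (hp : 0 < p)
    (hpN : p ≤ 4 * N₁) :
    (#{z ∈ nearCoincidences N₁ N₂ N₃ N₄ δ | elimTrace z = p} : ℝ) ≤ D ^ 2 *
      (144 * (68 * δ * N₁ * √(N₄ : ℝ)) * (√(N₂ : ℝ) * √(N₄ : ℝ)) * D * (16 * N₁)) := by
  have hfiber := card_le_mul_card_image (f := fun z => (elimCross z, elimNorm z))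
    {z ∈ nearCoincidences N₁ N₂ N₃ N₄ δ | elimTrace z = p} ⌊D ^ 2⌋₊ fun x hx => by
      obtain ⟨z, hz, rfl⟩ := mem_image.1 hx
      obtain ⟨hz, htrace⟩ := mem_filter.1 hz
      refine (card_le_card fun w hw => ?_).trans
        (card_elim_eq_le_sq hN₂ (eight_mul_sqrt_le_one hδ hδN) hD hz)
      simp only [mem_filter, Prod.mk.injEq] at hw ⊢
      exact ⟨hw.1.1, hw.1.2.trans htrace.symm, hw.2⟩
  calc (#{z ∈ nearCoincidences N₁ N₂ N₃ N₄ δ | elimTrace z = p} : ℝ)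
      ≤ (⌊D ^ 2⌋₊ : ℝ) * #(image (fun z => (elimCross z, elimNorm z))
        {z ∈ nearCoincidences N₁ N₂ N₃ N₄ δ | elimTrace z = p}) := by exact_mod_cast hfiber
    _ ≤ _ := by
      gcongr
      · exact Nat.floor_le (sq_nonneg D)
      · exact card_image_elim_le_of_divisors_le hδ hN₂ hN₂₁ hN₄ hδN hD hp hpN

lemma card_nearCoincidences_le_of_small (hδ : 0 < δ) (hN₂ : 0 < N₂) (hN₂₁ : N₂ ≤ N₁)
    (hN₄ : N₄ ≤ N₁) (hδN : 200 * δ * (N₁ : ℝ) ^ 2 ≤ 1)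
    (hD : ∀ k : ℕ, k ≠ 0 → k ≤ 16 * N₁ ^ 2 → (#k.divisors : ℝ) ≤ D) :
    (#(nearCoincidences N₁ N₂ N₃ N₄ δ) : ℝ) ≤
      700000 * D ^ 3 * (δ * (N₁ : ℝ) ^ 3 * N₄ * √(N₂ : ℝ)) := by
  have hD0 : 0 ≤ D :=
    (Nat.cast_nonneg _).trans (hD 1 one_ne_zero (by nlinarith [hN₂.trans_le hN₂₁]))
  have hcover : nearCoincidences N₁ N₂ N₃ N₄ δ ⊆ (Icc 1 (4 * N₁)).biUnion fun p =>
      {z ∈ nearCoincidences N₁ N₂ N₃ N₄ δ | elimTrace z = p} := fun z hz => by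
    have hpos := elimTrace_pos (eight_mul_sqrt_le_one hδ hδN) hz
    have hle := elimTrace_le hz
    lift elimTrace z to ℕ using hpos.le with p hp
    exact mem_biUnion.2 ⟨p, mem_Icc.2 ⟨by lia, by lia⟩, mem_filter.2 ⟨hz, hp.symm⟩⟩
  calc (#(nearCoincidences N₁ N₂ N₃ N₄ δ) : ℝ)
      ≤ ∑ p ∈ Icc 1 (4 * N₁), (#{z ∈ nearCoincidences N₁ N₂ N₃ N₄ δ | elimTrace z = p} : ℝ) := by
        exact_mod_cast (card_le_card hcover).trans card_biUnion_le
    _ ≤ ∑ p ∈ Icc 1 (4 * N₁), D ^ 2 *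
        (144 * (68 * δ * N₁ * √(N₄ : ℝ)) * (√(N₂ : ℝ) * √(N₄ : ℝ)) * D * (16 * N₁)) :=
        sum_le_sum fun p hp => card_elimTrace_eq_le hδ hN₂ hN₂₁ hN₄ hδN hD
          (mem_Icc.1 hp).1 (mem_Icc.1 hp).2
    _ = 626688 * D ^ 3 * (δ * (N₁ : ℝ) ^ 3 * (√(N₄ : ℝ) * √(N₄ : ℝ)) * √(N₂ : ℝ)) := by
        rw [sum_const, Nat.card_Icc, Nat.add_sub_cancel, nsmul_eq_mul]
        push_cast
        ring
    _ ≤ 700000 * D ^ 3 * (δ * (N₁ : ℝ) ^ 3 * N₄ * √(N₂ : ℝ)) := by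
        rw [mul_self_sqrt N₄.cast_nonneg]
        gcongr
        norm_num

end EliminationCount

section CountRegimes

/-- The main factor `(N₁N₂N₃N₄)^{3/4}` of the counting bound; evaluated at the variables themselves,
it is also the denominator of the weight in the theorem. -/
def quadScale (N₁ N₂ N₃ N₄ : ℕ) : ℝ := ((N₁ : ℝ) * N₂ * N₃ * N₄) ^ ((3 : ℝ) / 4)

variable {N₁ N₂ N₃ N₄ : ℕ} {δ : ℝ}

lemma quadScale_nonneg (N₁ N₂ N₃ N₄ : ℕ) : 0 ≤ quadScale N₁ N₂ N₃ N₄ := by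
  unfold quadScale; positivity

lemma quadScale_sq (N₁ N₂ N₃ N₄ : ℕ) : quadScale N₁ N₂ N₃ N₄ ^ 2 =
    (N₁ : ℝ) * N₂ * N₃ * N₄ * (√(N₁ : ℝ) * √(N₂ : ℝ) * √(N₃ : ℝ) * √(N₄ : ℝ)) := by
  have hprod : (0 : ℝ) ≤ N₁ * N₂ * N₃ * N₄ := by positivity
  rw [← sqrt_mul (by positivity), ← sqrt_mul (by positivity), ← sqrt_mul (by positivity),
    sqrt_eq_rpow, quadScale, ← rpow_natCast, ← rpow_mul hprod]
  nth_rewrite 2 [← rpow_one ((N₁ : ℝ) * N₂ * N₃ * N₄)]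
  rw [← rpow_add_of_nonneg hprod (by norm_num) (by norm_num)]
  norm_num

lemma quadScale_pow_four (N₁ N₂ N₃ N₄ : ℕ) :
    quadScale N₁ N₂ N₃ N₄ ^ 4 = ((N₁ : ℝ) * N₂ * N₃ * N₄) ^ 3 := by
  rw [quadScale, ← rpow_natCast, ← rpow_mul (by positivity), ← rpow_natCast]
  norm_num

lemma mul_mul_le_quadScale (h₂₁ : N₂ ≤ N₁) (h₃₁ : N₃ ≤ N₁) (h₄₁ : N₄ ≤ N₁) :
    (N₂ : ℝ) * N₃ * N₄ ≤ quadScale N₁ N₂ N₃ N₄ := by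
  refine le_of_pow_le_pow_left₀ four_ne_zero (quadScale_nonneg N₁ N₂ N₃ N₄) ?_
  calc ((N₂ : ℝ) * N₃ * N₄) ^ 4 = ((N₂ : ℝ) * N₃ * N₄) ^ 3 * (N₂ * N₃ * N₄) := by ring
    _ ≤ ((N₂ : ℝ) * N₃ * N₄) ^ 3 * (N₁ * N₁ * N₁) := by gcongr
    _ = quadScale N₁ N₂ N₃ N₄ ^ 4 := by rw [quadScale_pow_four]; ring

lemma abs_floor_div_sub_floor_div_le_one {x y : ℝ} (hδ : 0 < δ) (h : |x - y| ≤ δ) :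
    |⌊x / δ⌋ - ⌊y / δ⌋| ≤ 1 := by
  have hdiv : |x / δ - y / δ| ≤ 1 := by
    rwa [← sub_div, abs_div, abs_of_pos hδ, div_le_one hδ]
  obtain ⟨hlower, hupper⟩ := abs_le.1 hdiv
  rw [abs_sub_le_iff]
  constructor <;> rw [sub_le_iff_le_add', ← Int.floor_add_one] <;> gcongr <;> linarith

lemma nearCoincidences_subset_closePairs (N₁ N₂ N₃ N₄ : ℕ) (δ : ℝ) :
    nearCoincidences N₁ N₂ N₃ N₄ δ ⊆
      closePairs (dyadicBox N₁ N₂) (dyadicBox N₃ N₄) (sqrtSumBin δ) (sqrtSumBin δ) := by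
  intro z hz
  obtain ⟨hbox, ⟨-, hsize⟩, -⟩ := mem_filter.1 hz
  exact mem_filter.2
    ⟨hbox, abs_floor_div_sub_floor_div_le_one (pos_of_mem_nearCoincidences hz) hsize⟩

lemma card_closePairs_comm {α β : Type*} (P : Finset α) (Q : Finset β) (f : α → ℤ) (g : β → ℤ) :
    #(closePairs P Q f g) = #(closePairs Q P g f) := by
  refine card_nbij' Prod.swap Prod.swap ?_ ?_ (fun _ _ => rfl) (fun _ _ => rfl) <;>
  · rintro ⟨x, y⟩ h
    simp only [closePairs, mem_coe, mem_filter, mem_product, Prod.swap_prod_mk] at h ⊢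
    rw [abs_sub_comm]
    exact ⟨h.1.symm, h.2⟩

lemma card_nearCoincidences_fiber_le (hδ : 0 < δ) (b : ℕ × ℕ × ℕ) :
    (#{z ∈ nearCoincidences N₁ N₂ N₃ N₄ δ | (z.1.2, z.2) = b} : ℝ) ≤ 1 + 6 * (√(N₁ : ℝ) * δ) := by
  obtain ⟨m₂, m⟩ := b
  have hmem : ∀ z ∈ {z ∈ nearCoincidences N₁ N₂ N₃ N₄ δ | (z.1.2, z.2) = (m₂, m)},
      ∃ n ∈ Ico N₁ (2 * N₁), z = ((n, m₂), m) ∧ |√(n : ℝ) + √(m₂ : ℝ) - sqrtSum m| ≤ δ := by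
    rintro ⟨⟨n, n₂⟩, m'⟩ hz
    obtain ⟨hnear, heq⟩ := mem_filter.1 hz
    obtain ⟨rfl, rfl⟩ := Prod.mk.inj heq
    obtain ⟨hbox, ⟨-, hsize⟩, -⟩ := mem_filter.1 hnear
    exact ⟨n, (mem_product.1 (mem_product.1 hbox).1).1, rfl, hsize⟩
  have hinj : Set.InjOn (fun z : (ℕ × ℕ) × ℕ × ℕ => z.1.1)
      ↑{z ∈ nearCoincidences N₁ N₂ N₃ N₄ δ | (z.1.2, z.2) = (m₂, m)} := by
    intro z hz z' hz' h
    obtain ⟨n, -, rfl, -⟩ := hmem z hz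
    obtain ⟨n', -, rfl, -⟩ := hmem z' hz'
    rw [show n = n' from h]
  rw [← card_image_of_injOn hinj]
  refine card_le_one_add_of_sub_le (by positivity) fun x hx y hy hxy => ?_
  obtain ⟨z, hz, rfl⟩ := mem_image.1 hx
  obtain ⟨z', hz', rfl⟩ := mem_image.1 hy
  obtain ⟨n, hn, rfl, hsize⟩ := hmem z hz
  obtain ⟨n', hn', rfl, hsize'⟩ := hmem z' hz'
  calc (n' : ℝ) - n = (√(n' : ℝ) - √(n : ℝ)) * (√(n' : ℝ) + √(n : ℝ)) :=
        (sqrt_sub_mul_sqrt_add n'.cast_nonneg n.cast_nonneg).symm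
    _ ≤ 2 * δ * (3 * √(N₁ : ℝ)) := by
      gcongr
      · linarith [(abs_le.1 hsize).1, (abs_le.1 hsize').2]
      · linarith [sqrt_le_of_mem_Ico hn, sqrt_le_of_mem_Ico hn']
    _ = 6 * (√(N₁ : ℝ) * δ) := by ring

lemma card_nearCoincidences_le_of_large (h₂₁ : N₂ ≤ N₁) (h₃₁ : N₃ ≤ N₁) (h₄₁ : N₄ ≤ N₁)
    (hδ : 0 < δ) (hδN : 1 < 8 * δ * √(N₁ : ℝ)) :
    (#(nearCoincidences N₁ N₂ N₃ N₄ δ) : ℝ) ≤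
      14 * quadScale N₁ N₂ N₃ N₄ * (√(N₁ : ℝ) * δ) := by
  have hmaps : ∀ z ∈ nearCoincidences N₁ N₂ N₃ N₄ δ,
      (z.1.2, z.2) ∈ Ico N₂ (2 * N₂) ×ˢ dyadicBox N₃ N₄ := fun z hz => by
    have hbox := mem_product.1 (mem_filter.1 hz).1
    exact mem_product.2 ⟨(mem_product.1 hbox.1).2, hbox.2⟩
  have hcard : #(Ico N₂ (2 * N₂) ×ˢ dyadicBox N₃ N₄) = N₂ * (N₃ * N₄) := by
    rw [card_product, card_dyadicBox, Nat.card_Ico, two_mul, Nat.add_sub_cancel]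
  calc (#(nearCoincidences N₁ N₂ N₃ N₄ δ) : ℝ)
      = ∑ b ∈ Ico N₂ (2 * N₂) ×ˢ dyadicBox N₃ N₄,
          (#{z ∈ nearCoincidences N₁ N₂ N₃ N₄ δ | (z.1.2, z.2) = b} : ℝ) := by
        exact_mod_cast card_eq_sum_card_fiberwise hmaps
    _ ≤ #(Ico N₂ (2 * N₂) ×ˢ dyadicBox N₃ N₄) • (14 * (√(N₁ : ℝ) * δ)) :=
        sum_le_card_nsmul _ _ _ fun b _ =>
          (card_nearCoincidences_fiber_le hδ b).trans (by linarith)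
    _ = 14 * (N₂ * N₃ * N₄) * (√(N₁ : ℝ) * δ) := by
        rw [hcard, nsmul_eq_mul]; push_cast; ring
    _ ≤ 14 * quadScale N₁ N₂ N₃ N₄ * (√(N₁ : ℝ) * δ) := by
        gcongr; exact mul_mul_le_quadScale h₂₁ h₃₁ h₄₁

lemma card_nearCoincidences_mul_sqrt_le (hN₂ : 0 < N₂) (hN₄ : 0 < N₄) (h₂₁ : N₂ ≤ N₁)
    (h₄₃ : N₄ ≤ N₃) (h₃₁ : N₃ ≤ N₁) (h₁₃ : N₁ ≤ 8 * N₃) (hδ : 0 < δ)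
    (hδN : 8 * δ * √(N₁ : ℝ) ≤ 1) :
    #(nearCoincidences N₁ N₂ N₃ N₄ δ) * √(N₁ : ℝ) ≤
      6 * (28 + 1620 * δ * N₁) * quadScale N₁ N₂ N₃ N₄ := by
  have hs : √(N₁ : ℝ) ≤ 3 * √(N₃ : ℝ) := by
    rw [sqrt_le_left (by positivity), mul_pow, sq_sqrt N₃.cast_nonneg]
    have : (N₁ : ℝ) ≤ 8 * N₃ := by exact_mod_cast h₁₃
    linarith [N₃.cast_nonneg (α := ℝ)]
  have hsq : (#(nearCoincidences N₁ N₂ N₃ N₄ δ) : ℝ) ^ 2 ≤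
      9 * (fiberMoment 2 (dyadicBox N₁ N₂) (sqrtSumBin δ) *
        fiberMoment 2 (dyadicBox N₃ N₄) (sqrtSumBin δ)) := by
    exact_mod_cast (Nat.pow_le_pow_left
      (card_le_card (nearCoincidences_subset_closePairs N₁ N₂ N₃ N₄ δ)) 2).trans
        (card_closePairs_sq_le ..)
  have hmoment := fiberMoment_two_sqrtSumBin_le hN₂ h₂₁ hδ hδN
  have hmoment' : (fiberMoment 2 (dyadicBox N₃ N₄) (sqrtSumBin δ) : ℝ) ≤
      N₃ * (N₄ * √(N₄ : ℝ)) * (28 + 1620 * δ * N₁) :=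
    (fiberMoment_two_sqrtSumBin_le hN₄ h₄₃ hδ (mul_sqrt_le_one_of_le hδ h₃₁ hδN)).trans
      (by gcongr)
  have hscale := quadScale_nonneg N₁ N₂ N₃ N₄
  set u := 28 + 1620 * δ * (N₁ : ℝ)
  refine le_of_pow_le_pow_left₀ two_ne_zero (by positivity) ?_
  calc (#(nearCoincidences N₁ N₂ N₃ N₄ δ) * √(N₁ : ℝ)) ^ 2
      = #(nearCoincidences N₁ N₂ N₃ N₄ δ) ^ 2 * (√(N₁ : ℝ) * √(N₁ : ℝ)) := by ring
    _ ≤ 9 * ((N₁ * (N₂ * √(N₂ : ℝ)) * u) * (N₃ * (N₄ * √(N₄ : ℝ)) * u)) *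
        (√(N₁ : ℝ) * (3 * √(N₃ : ℝ))) := by
      gcongr; exact hsq.trans (by gcongr)
    _ = 27 * u ^ 2 * quadScale N₁ N₂ N₃ N₄ ^ 2 := by rw [quadScale_sq]; ring
    _ ≤ 36 * u ^ 2 * quadScale N₁ N₂ N₃ N₄ ^ 2 := by gcongr; norm_num
    _ = (6 * u * quadScale N₁ N₂ N₃ N₄) ^ 2 := by ring

lemma rpow_one_div_four_pow_four (hδ : 0 ≤ δ) : (δ ^ ((1 : ℝ) / 4)) ^ 4 = δ := by
  rw [← rpow_natCast, ← rpow_mul hδ]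
  norm_num

lemma card_nearCoincidences_le_of_medium (hN₂ : 0 < N₂) (hN₄ : 0 < N₄) (h₂₁ : N₂ ≤ N₁)
    (h₄₃ : N₄ ≤ N₃) (h₃₁ : N₃ ≤ N₁) (h₁₃ : N₁ ≤ 8 * N₃) (hδ : 0 < δ)
    (hδN : 8 * δ * √(N₁ : ℝ) ≤ 1) (hδN' : 1 < 200 * δ * (N₁ : ℝ) ^ 2) :
    (#(nearCoincidences N₁ N₂ N₃ N₄ δ) : ℝ) ≤
      10000 * quadScale N₁ N₂ N₃ N₄ * (δ ^ ((1 : ℝ) / 4) + √(N₁ : ℝ) * δ) := by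
  have hN₁ : 0 < √(N₁ : ℝ) := sqrt_pos.2 (by exact_mod_cast hN₂.trans_le h₂₁)
  have hscale := quadScale_nonneg N₁ N₂ N₃ N₄
  have hηN : 1 < 4 * δ ^ ((1 : ℝ) / 4) * √(N₁ : ℝ) := by
    refine lt_of_pow_lt_pow_left₀ 4 (by positivity) ?_
    calc (1 : ℝ) ^ 4 < 256 * δ * (N₁ : ℝ) ^ 2 := by linarith
      _ = 256 * (δ ^ ((1 : ℝ) / 4)) ^ 4 * (√(N₁ : ℝ) ^ 2) ^ 2 := by
        rw [rpow_one_div_four_pow_four hδ.le, sq_sqrt N₁.cast_nonneg]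
      _ = (4 * δ ^ ((1 : ℝ) / 4) * √(N₁ : ℝ)) ^ 4 := by ring
  refine le_of_mul_le_mul_right ?_ hN₁
  calc #(nearCoincidences N₁ N₂ N₃ N₄ δ) * √(N₁ : ℝ)
      ≤ 6 * (28 + 1620 * δ * N₁) * quadScale N₁ N₂ N₃ N₄ :=
        card_nearCoincidences_mul_sqrt_le hN₂ hN₄ h₂₁ h₄₃ h₃₁ h₁₃ hδ hδN
    _ ≤ 6 * (28 * (4 * δ ^ ((1 : ℝ) / 4) * √(N₁ : ℝ)) +
          1620 * δ * (√(N₁ : ℝ) * √(N₁ : ℝ))) * quadScale N₁ N₂ N₃ N₄ := by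
        rw [mul_self_sqrt N₁.cast_nonneg]; gcongr; linarith
    _ = quadScale N₁ N₂ N₃ N₄ * (672 * δ ^ ((1 : ℝ) / 4) + 9720 * (√(N₁ : ℝ) * δ)) *
          √(N₁ : ℝ) := by ring
    _ ≤ quadScale N₁ N₂ N₃ N₄ * (10000 * δ ^ ((1 : ℝ) / 4) + 10000 * (√(N₁ : ℝ) * δ)) *
          √(N₁ : ℝ) := by gcongr <;> norm_num
    _ = 10000 * quadScale N₁ N₂ N₃ N₄ * (δ ^ ((1 : ℝ) / 4) + √(N₁ : ℝ) * δ) * √(N₁ : ℝ) := by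
        ring

lemma card_nearCoincidences_cube_le (hN₂ : 0 < N₂) (hN₄ : 0 < N₄) (h₂₁ : N₂ ≤ N₁) (h₄₃ : N₄ ≤ N₃)
    (h₃₁ : N₃ ≤ N₁) (hδ : 0 < δ) (hδN : 200 * δ * (N₁ : ℝ) ^ 2 ≤ 1) :
    (#(nearCoincidences N₁ N₂ N₃ N₄ δ) : ℝ) ^ 3 ≤
      27 * (15849 * (1 + log N₁) * (N₃ * (N₄ : ℝ) ^ 2) *
        (N₁ * N₂ * (37 * (N₁ * (N₂ * √(N₂ : ℝ)))))) := by
  have hN₁ : (1 : ℝ) ≤ N₁ := by exact_mod_cast hN₂.trans_le h₂₁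
  have hN₃ : (1 : ℝ) ≤ N₃ := by exact_mod_cast hN₄.trans_le h₄₃
  have hlog : log N₄ ≤ log N₁ :=
    log_le_log (by exact_mod_cast hN₄) (by exact_mod_cast h₄₃.trans h₃₁)
  have hsqrt : 8 * δ * √(N₁ : ℝ) ≤ 1 := eight_mul_sqrt_le_one hδ hδN
  have hδN₁ : δ * N₁ ≤ 1 / 200 := by nlinarith
  have hδN₃ : δ * (N₃ * √(N₃ : ℝ)) ≤ 1 :=
    calc δ * (N₃ * √(N₃ : ℝ)) ≤ δ * (N₁ * N₁) := by
          gcongr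
          exact (sqrt_le_self_iff.2 (Or.inr hN₃)).trans (by exact_mod_cast h₃₁)
      _ ≤ 1 := by nlinarith
  have hcube : (#(nearCoincidences N₁ N₂ N₃ N₄ δ) : ℝ) ^ 3 ≤
      27 * (fiberMoment 3 (dyadicBox N₃ N₄) (sqrtSumBin δ) *
        (N₁ * N₂ * fiberMoment 2 (dyadicBox N₁ N₂) (sqrtSumBin δ))) := by
    have hswap := (card_le_card (nearCoincidences_subset_closePairs N₁ N₂ N₃ N₄ δ)).trans_eq
      (card_closePairs_comm ..)
    have := (Nat.pow_le_pow_left hswap 3).trans (card_closePairs_cube_le ..)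
    rw [card_dyadicBox] at this
    exact_mod_cast this
  refine hcube.trans ?_
  gcongr
  · exact (fiberMoment_three_sqrtSumBin_le hN₄ h₄₃ hδ (mul_sqrt_le_one_of_le hδ h₃₁ hsqrt)
      hδN₃).trans (by gcongr)
  · refine (fiberMoment_two_sqrtSumBin_le hN₂ h₂₁ hδ hsqrt).trans ?_
    rw [mul_comm (37 : ℝ)]
    gcongr
    linarith

/- The cube is controlled by the third moment and the first power by the divisor bound; only the
product of the two has the right order of magnitude. -/
lemma card_nearCoincidences_le_rpow_of_small (hN₂ : 0 < N₂) (hN₄ : 0 < N₄) (h₂₁ : N₂ ≤ N₁)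
    (h₄₃ : N₄ ≤ N₃) (h₃₁ : N₃ ≤ N₁) (h₁₃ : N₁ ≤ 8 * N₃) (hδ : 0 < δ)
    (hδN : 200 * δ * (N₁ : ℝ) ^ 2 ≤ 1) {D : ℝ} (hD₁ : 1 ≤ D)
    (hD : ∀ k : ℕ, k ≠ 0 → k ≤ 16 * N₁ ^ 2 → (#k.divisors : ℝ) ≤ D) :
    (#(nearCoincidences N₁ N₂ N₃ N₄ δ) : ℝ) ≤
      10000 * D * (1 + log N₁) * quadScale N₁ N₂ N₃ N₄ * δ ^ ((1 : ℝ) / 4) := by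
  have hlog : 1 ≤ 1 + log N₁ := by linarith [log_natCast_nonneg N₁]
  have hN₁₃ : (N₁ : ℝ) ≤ 8 * N₃ := by exact_mod_cast h₁₃
  have hscale := quadScale_nonneg N₁ N₂ N₃ N₄
  refine le_of_pow_le_pow_left₀ four_ne_zero (by positivity) ?_
  calc (#(nearCoincidences N₁ N₂ N₃ N₄ δ) : ℝ) ^ 4
      = #(nearCoincidences N₁ N₂ N₃ N₄ δ) ^ 3 * #(nearCoincidences N₁ N₂ N₃ N₄ δ) := pow_succ _ 3
    _ ≤ 27 * (15849 * (1 + log N₁) * (N₃ * (N₄ : ℝ) ^ 2) *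
          (N₁ * N₂ * (37 * (N₁ * (N₂ * √(N₂ : ℝ)))))) *
        (700000 * D ^ 3 * (δ * (N₁ : ℝ) ^ 3 * N₄ * √(N₂ : ℝ))) := by
      gcongr
      · exact card_nearCoincidences_cube_le hN₂ hN₄ h₂₁ h₄₃ h₃₁ hδ hδN
      · exact card_nearCoincidences_le_of_small hδ hN₂ h₂₁ (h₄₃.trans h₃₁) hδN hD
    _ = 27 * 15849 * 37 * 700000 * (D ^ 3 * (1 + log N₁)) * δ *
        (N₁ ^ 3 * N₂ ^ 2 * N₃ * N₄ ^ 3 * (√(N₂ : ℝ) * √(N₂ : ℝ)) * (N₁ : ℝ) ^ 2) := by ring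
    _ ≤ 27 * 15849 * 37 * 700000 * (D ^ 4 * (1 + log N₁) ^ 4) * δ *
        (N₁ ^ 3 * N₂ ^ 2 * N₃ * N₄ ^ 3 * N₂ * (8 * (N₃ : ℝ)) ^ 2) := by
      rw [mul_self_sqrt N₂.cast_nonneg]
      gcongr
      · norm_num
      · exact le_self_pow₀ hlog four_ne_zero
    _ = 27 * 15849 * 37 * 700000 * 64 * (D ^ 4 * (1 + log N₁) ^ 4 * δ *
        quadScale N₁ N₂ N₃ N₄ ^ 4) := by rw [quadScale_pow_four]; ring
    _ ≤ 10000 ^ 4 * (D ^ 4 * (1 + log N₁) ^ 4 * δ * quadScale N₁ N₂ N₃ N₄ ^ 4) := by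
      gcongr; norm_num
    _ = (10000 * D * (1 + log N₁) * quadScale N₁ N₂ N₃ N₄ * δ ^ ((1 : ℝ) / 4)) ^ 4 := by
      nth_rewrite 1 [← rpow_one_div_four_pow_four hδ.le]
      ring

lemma card_nearCoincidences_le (hN₂ : 0 < N₂) (hN₄ : 0 < N₄) (h₂₁ : N₂ ≤ N₁) (h₄₃ : N₄ ≤ N₃)
    (h₃₁ : N₃ ≤ N₁) (hδ : 0 < δ) {D : ℝ}
    (hD : ∀ k : ℕ, k ≠ 0 → k ≤ 16 * N₁ ^ 2 → (#k.divisors : ℝ) ≤ D) :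
    (#(nearCoincidences N₁ N₂ N₃ N₄ δ) : ℝ) ≤ 10000 * D * (1 + log N₁) *
      quadScale N₁ N₂ N₃ N₄ * (δ ^ ((1 : ℝ) / 4) + √(N₁ : ℝ) * δ) := by
  have hN₁ : 0 < N₁ := hN₂.trans_le h₂₁
  have hD₁ : 1 ≤ D := by simpa using hD 1 one_ne_zero (by nlinarith)
  have hlog : 1 ≤ 1 + log N₁ := by linarith [log_natCast_nonneg N₁]
  have hDlog : 1 ≤ D * (1 + log N₁) := one_le_mul_of_one_le_of_one_le hD₁ hlog
  have hscale := quadScale_nonneg N₁ N₂ N₃ N₄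
  have hweaken (h : (#(nearCoincidences N₁ N₂ N₃ N₄ δ) : ℝ) ≤
      10000 * quadScale N₁ N₂ N₃ N₄ * (δ ^ ((1 : ℝ) / 4) + √(N₁ : ℝ) * δ)) :
      (#(nearCoincidences N₁ N₂ N₃ N₄ δ) : ℝ) ≤ 10000 * D * (1 + log N₁) *
        quadScale N₁ N₂ N₃ N₄ * (δ ^ ((1 : ℝ) / 4) + √(N₁ : ℝ) * δ) :=
    calc (#(nearCoincidences N₁ N₂ N₃ N₄ δ) : ℝ)
        ≤ 1 * (10000 * quadScale N₁ N₂ N₃ N₄ * (δ ^ ((1 : ℝ) / 4) + √(N₁ : ℝ) * δ)) := by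
          rwa [one_mul]
      _ ≤ D * (1 + log N₁) *
          (10000 * quadScale N₁ N₂ N₃ N₄ * (δ ^ ((1 : ℝ) / 4) + √(N₁ : ℝ) * δ)) := by gcongr
      _ = _ := by ring
  obtain hlarge | hδN := lt_or_ge 1 (8 * δ * √(N₁ : ℝ))
  · refine hweaken ((card_nearCoincidences_le_of_large h₂₁ h₃₁ (h₄₃.trans h₃₁) hδ
      hlarge).trans ?_)
    gcongr
    · norm_num
    · exact le_add_of_nonneg_left (by positivity)
  obtain hempty | ⟨⟨⟨n₁, n₂⟩, n₃, n₄⟩, hz⟩ := (nearCoincidences N₁ N₂ N₃ N₄ δ).eq_empty_or_nonempty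
  · rw [hempty, card_empty, Nat.cast_zero]
    positivity
  have h₁₃ : N₁ ≤ 8 * N₃ := by
    have hbox := (mem_nearCoincidences.1 hz).1
    have := mem_Ico.1 hbox.1.1
    have := mem_Ico.1 hbox.2.1
    have := fst_le_four_mul_of_mem_nearCoincidences hN₂ hδN hz
    lia
  obtain hmedium | hsmall := lt_or_ge 1 (200 * δ * (N₁ : ℝ) ^ 2)
  · exact hweaken
      (card_nearCoincidences_le_of_medium hN₂ hN₄ h₂₁ h₄₃ h₃₁ h₁₃ hδ hδN hmedium)
  · refine (card_nearCoincidences_le_rpow_of_small hN₂ hN₄ h₂₁ h₄₃ h₃₁ h₁₃ hδ hsmall hD₁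
      hD).trans ?_
    gcongr
    exact le_add_of_nonneg_right (by positivity)

end CountRegimes

section DyadicDecomposition

lemma sum_le_two_mul_sum_filter {α : Type*} {S : Finset α} {F : α → ℝ} {σ : α → α}
    (hσ : Function.Involutive σ) (hS : ∀ z ∈ S, σ z ∈ S) (hFσ : ∀ z, F (σ z) = F z)
    (hF : ∀ z, 0 ≤ F z) (p : α → Prop) [DecidablePred p] (hp : ∀ z, p z ∨ p (σ z)) :
    ∑ z ∈ S, F z ≤ 2 * ∑ z ∈ S with p z, F z := by
  have hreflect : ∑ z ∈ S with p (σ z), F z = ∑ z ∈ S with p z, F z := by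
    refine sum_nbij' σ σ ?_ ?_ (fun z _ => hσ z) (fun z _ => hσ z) fun z _ => (hFσ z).symm
    · intro z hz
      rw [mem_filter] at hz ⊢
      exact ⟨hS z hz.1, hz.2⟩
    · intro z hz
      rw [mem_filter] at hz ⊢
      exact ⟨hS z hz.1, (hσ z).symm ▸ hz.2⟩
  calc ∑ z ∈ S, F z
      ≤ ∑ z ∈ S, ((if p z then F z else 0) + if p (σ z) then F z else 0) := by
        refine sum_le_sum fun z _ => ?_
        have := hF z
        have := hp z
        split_ifs <;> first | linarith | tauto
    _ = 2 * ∑ z ∈ S with p z, F z := by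
        rw [sum_add_distrib, ← sum_filter, ← sum_filter, hreflect, two_mul]

lemma min_div_le_sum_dyadic {a x K : ℝ} {L : ℕ} (ha : 0 < a) (hK : 0 ≤ K)
    (hL : x ≤ 2 ^ L * a) :
    min (K / a) (K / x) ≤ ∑ j ∈ range (L + 1) with x ≤ 2 ^ j * a, 2 * K / (2 ^ j * a) := by
  have hex : ∃ j : ℕ, x ≤ 2 ^ j * a := ⟨L, hL⟩
  have hfind : Nat.find hex ∈ {j ∈ range (L + 1) | x ≤ 2 ^ j * a} :=
    mem_filter.2 ⟨mem_range.2 (Nat.lt_succ_of_le (Nat.find_min' hex hL)), Nat.find_spec hex⟩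
  refine le_trans ?_ (single_le_sum (fun j _ => by positivity) hfind)
  rcases hj : Nat.find hex with - | j
  · refine (min_le_left _ _).trans ?_
    rw [pow_zero, one_mul]
    gcongr
    linarith
  · have hlt : 2 ^ j * a < x := not_le.1 (Nat.find_min hex (hj ▸ j.lt_succ_self))
    calc min (K / a) (K / x) ≤ K / x := min_le_right _ _
      _ ≤ K / (2 ^ j * a) := by gcongr
      _ = 2 * K / (2 ^ (j + 1) * a) := by
        rw [pow_succ', mul_assoc, mul_div_mul_left _ _ two_ne_zero]

/-- The weight `d(n₁)d(n₂)d(n₃)d(n₄) / (n₁n₂n₃n₄)^{3/4}` of the quadruple `((n₁, n₂), (n₃, n₄))`. -/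
def divisorWeight (z : (ℕ × ℕ) × (ℕ × ℕ)) : ℝ :=
  ((#z.1.1.divisors * #z.1.2.divisors * #z.2.1.divisors * #z.2.2.divisors : ℕ) : ℝ) /
    quadScale z.1.1 z.1.2 z.2.1 z.2.2

/-- The term of the off-diagonal sum at the quadruple `((n₁, n₂), (n₃, n₄))`. -/
def offdiagonalTerm (T : ℝ) (z : (ℕ × ℕ) × (ℕ × ℕ)) : ℝ :=
  if sqrtDiff z ≠ 0 then divisorWeight z * min (T ^ 2) (T ^ ((3 : ℝ) / 2) / |sqrtDiff z|) else 0

/-- The quadruples `((n₁, n₂), (n₃, n₄))` of positive integers up to `Y`. -/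
def quadBox (Y : ℕ) : Finset ((ℕ × ℕ) × (ℕ × ℕ)) :=
  (Icc 1 Y ×ˢ Icc 1 Y) ×ˢ (Icc 1 Y ×ˢ Icc 1 Y)

/-- The quadruples in `quadBox Y` with `n₂ ≤ n₁` and `n₄ ≤ n₃ ≤ n₁`: a fundamental domain for the
symmetries of the off-diagonal sum. -/
def orderedQuads (Y : ℕ) : Finset ((ℕ × ℕ) × (ℕ × ℕ)) :=
  {z ∈ quadBox Y | z.1.2 ≤ z.1.1 ∧ z.2.2 ≤ z.2.1 ∧ z.2.1 ≤ z.1.1}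

lemma divisorWeight_nonneg (z : (ℕ × ℕ) × (ℕ × ℕ)) : 0 ≤ divisorWeight z :=
  div_nonneg (Nat.cast_nonneg _) (quadScale_nonneg ..)

lemma offdiagonalTerm_nonneg {T : ℝ} (hT : 0 ≤ T) (z : (ℕ × ℕ) × (ℕ × ℕ)) :
    0 ≤ offdiagonalTerm T z := by
  have := divisorWeight_nonneg z
  unfold offdiagonalTerm
  split_ifs <;> positivity

lemma offdiagonalTerm_congr (T : ℝ) {z z' : (ℕ × ℕ) × (ℕ × ℕ)}
    (hweight : divisorWeight z = divisorWeight z') (hdiff : |sqrtDiff z| = |sqrtDiff z'|) :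
    offdiagonalTerm T z = offdiagonalTerm T z' := by
  have hne : sqrtDiff z ≠ 0 ↔ sqrtDiff z' ≠ 0 := by rw [← abs_pos, hdiff, abs_pos]
  simp only [offdiagonalTerm, hweight, hdiff, hne]

lemma sqrtSum_swap (x : ℕ × ℕ) : sqrtSum x.swap = sqrtSum x := add_comm _ _

lemma mem_quadBox {Y : ℕ} {z : (ℕ × ℕ) × (ℕ × ℕ)} : z ∈ quadBox Y ↔
    (z.1.1 ∈ Icc 1 Y ∧ z.1.2 ∈ Icc 1 Y) ∧ z.2.1 ∈ Icc 1 Y ∧ z.2.2 ∈ Icc 1 Y := by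
  simp only [quadBox, mem_product]

lemma offdiagonalTerm_map_swap_id (T : ℝ) (z : (ℕ × ℕ) × (ℕ × ℕ)) :
    offdiagonalTerm T (Prod.map Prod.swap id z) = offdiagonalTerm T z := by
  refine offdiagonalTerm_congr T ?_ ?_
  · simp only [divisorWeight, quadScale, Prod.map_fst, Prod.map_snd, Prod.fst_swap, Prod.snd_swap,
      id]
    congr 2 <;> ring
  · simp only [sqrtDiff, Prod.map_fst, Prod.map_snd, sqrtSum_swap, id]

lemma offdiagonalTerm_swap (T : ℝ) (z : (ℕ × ℕ) × (ℕ × ℕ)) :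
    offdiagonalTerm T z.swap = offdiagonalTerm T z := by
  refine offdiagonalTerm_congr T ?_ (abs_sub_comm _ _)
  simp only [divisorWeight, quadScale, Prod.fst_swap, Prod.snd_swap]
  congr 2 <;> ring

lemma offdiagonalTerm_map_id_swap (T : ℝ) (z : (ℕ × ℕ) × (ℕ × ℕ)) :
    offdiagonalTerm T (Prod.map id Prod.swap z) = offdiagonalTerm T z := by
  rw [← offdiagonalTerm_swap, ← offdiagonalTerm_map_swap_id]
  exact offdiagonalTerm_swap T z

lemma sum_offdiagonalTerm_le_sum_orderedQuads {T : ℝ} (hT : 0 ≤ T) (Y : ℕ) :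
    ∑ z ∈ quadBox Y, offdiagonalTerm T z ≤ 8 * ∑ z ∈ orderedQuads Y, offdiagonalTerm T z := by
  have hnonneg := offdiagonalTerm_nonneg hT
  have hleft := sum_le_two_mul_sum_filter (S := quadBox Y) (σ := Prod.map Prod.swap id)
    (fun _ => rfl) (fun z hz => by
      simp only [mem_quadBox, Prod.map_fst, Prod.map_snd, Prod.fst_swap, Prod.snd_swap, id] at hz ⊢
      exact ⟨hz.1.symm, hz.2⟩)
    (offdiagonalTerm_map_swap_id T) hnonneg (fun z => z.1.2 ≤ z.1.1) fun _ => le_total _ _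
  have hright := sum_le_two_mul_sum_filter (S := {z ∈ quadBox Y | z.1.2 ≤ z.1.1})
    (σ := Prod.map id Prod.swap) (fun _ => rfl) (fun z hz => by
      simp only [mem_filter, mem_quadBox, Prod.map_fst, Prod.map_snd, Prod.fst_swap,
        Prod.snd_swap, id] at hz ⊢
      exact ⟨⟨hz.1.1, hz.1.2.symm⟩, hz.2⟩)
    (offdiagonalTerm_map_id_swap T) hnonneg (fun z => z.2.2 ≤ z.2.1) fun _ => le_total _ _
  have hboth := sum_le_two_mul_sum_filter
    (S := {z ∈ {z ∈ quadBox Y | z.1.2 ≤ z.1.1} | z.2.2 ≤ z.2.1})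
    (σ := Prod.swap) (fun _ => rfl) (fun z hz => by
      simp only [mem_filter, mem_quadBox, Prod.fst_swap, Prod.snd_swap] at hz ⊢
      exact ⟨⟨hz.1.1.symm, hz.2⟩, hz.1.2⟩)
    (offdiagonalTerm_swap T) hnonneg (fun z => z.2.1 ≤ z.1.1) fun _ => le_total _ _
  rw [filter_filter, filter_filter] at hboth
  simp only [orderedQuads, ← and_assoc]
  rw [filter_filter] at hright
  linarith

end DyadicDecomposition

section WeightedCount

variable {N₁ N₂ N₃ N₄ : ℕ} {δ D : ℝ}

lemma divisorWeight_le_of_mem_nearCoincidences (hN₂ : 0 < N₂) (hN₄ : 0 < N₄) (h₂₁ : N₂ ≤ N₁)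
    (h₄₃ : N₄ ≤ N₃) (h₃₁ : N₃ ≤ N₁)
    (hD : ∀ k : ℕ, k ≠ 0 → k ≤ 16 * N₁ ^ 2 → (#k.divisors : ℝ) ≤ D) {z : (ℕ × ℕ) × (ℕ × ℕ)}
    (hz : z ∈ nearCoincidences N₁ N₂ N₃ N₄ δ) :
    divisorWeight z ≤ D ^ 4 / quadScale N₁ N₂ N₃ N₄ := by
  obtain ⟨⟨n₁, n₂⟩, n₃, n₄⟩ := z
  obtain ⟨⟨⟨h₁, h₂⟩, h₃, h₄⟩, -⟩ := mem_nearCoincidences.1 hz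
  have hdivisors : ∀ {n N : ℕ}, 0 < N → N ≤ N₁ → n ∈ Ico N (2 * N) → (#n.divisors : ℝ) ≤ D := by
    intro n N hN hNN₁ hn
    rw [mem_Ico] at hn
    exact hD n (by lia) (by nlinarith)
  have hN₃ := hN₄.trans_le h₄₃
  have hN₁ := hN₃.trans_le h₃₁
  have d₁ := hdivisors hN₁ le_rfl h₁
  have d₂ := hdivisors hN₂ h₂₁ h₂
  have d₃ := hdivisors hN₃ h₃₁ h₃
  have d₄ := hdivisors hN₄ (h₄₃.trans h₃₁) h₄
  have hnonneg : 0 ≤ D := (Nat.cast_nonneg _).trans d₁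
  have hscale : quadScale N₁ N₂ N₃ N₄ ≤ quadScale n₁ n₂ n₃ n₄ := by
    rw [mem_Ico] at h₁ h₂ h₃ h₄
    unfold quadScale
    gcongr <;> tauto
  have hpos : 0 < quadScale N₁ N₂ N₃ N₄ := by unfold quadScale; positivity
  refine div_le_div₀ (by positivity) ?_ hpos hscale
  push_cast
  calc (#n₁.divisors : ℝ) * #n₂.divisors * #n₃.divisors * #n₄.divisors
      ≤ D * D * D * D := by gcongr
    _ = D ^ 4 := by ring

lemma sum_divisorWeight_nearCoincidences_le (hN₂ : 0 < N₂) (hN₄ : 0 < N₄) (h₂₁ : N₂ ≤ N₁)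
    (h₄₃ : N₄ ≤ N₃) (h₃₁ : N₃ ≤ N₁) (hδ : 0 < δ)
    (hD : ∀ k : ℕ, k ≠ 0 → k ≤ 16 * N₁ ^ 2 → (#k.divisors : ℝ) ≤ D) :
    ∑ z ∈ nearCoincidences N₁ N₂ N₃ N₄ δ, divisorWeight z ≤
      10000 * D ^ 5 * (1 + log N₁) * (δ ^ ((1 : ℝ) / 4) + √N₁ * δ) := by
  have hN₃ := hN₄.trans_le h₄₃
  have hN₁ := hN₃.trans_le h₃₁
  have hpos : 0 < quadScale N₁ N₂ N₃ N₄ := by unfold quadScale; positivity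
  calc ∑ z ∈ nearCoincidences N₁ N₂ N₃ N₄ δ, divisorWeight z
      ≤ #(nearCoincidences N₁ N₂ N₃ N₄ δ) * (D ^ 4 / quadScale N₁ N₂ N₃ N₄) := by
        rw [← nsmul_eq_mul]
        exact sum_le_card_nsmul _ _ _ fun z hz =>
          divisorWeight_le_of_mem_nearCoincidences hN₂ hN₄ h₂₁ h₄₃ h₃₁ hD hz
    _ ≤ 10000 * D * (1 + log N₁) * quadScale N₁ N₂ N₃ N₄ * (δ ^ ((1 : ℝ) / 4) + √N₁ * δ) *
          (D ^ 4 / quadScale N₁ N₂ N₃ N₄) := by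
        gcongr
        exact card_nearCoincidences_le hN₂ hN₄ h₂₁ h₄₃ h₃₁ hδ hD
    _ = 10000 * D ^ 5 * (1 + log N₁) * (δ ^ ((1 : ℝ) / 4) + √N₁ * δ) := by
        field_simp

lemma le_of_two_pow_lt_two_mul_two_pow {a b m n : ℕ} (ha : 2 ^ a ≤ m) (hmn : m ≤ n)
    (hb : n < 2 * 2 ^ b) : a ≤ b :=
  Nat.lt_succ_iff.1 ((Nat.pow_lt_pow_iff_right one_lt_two).1
    (by rw [pow_succ']; exact (ha.trans hmn).trans_lt hb))

lemma sum_divisorWeight_nearCoincidences_two_pow_le {Y a b c d : ℕ} (ha : 2 ^ a ≤ Y) (hδ : 0 < δ)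
    (hD : ∀ k : ℕ, k ≠ 0 → k ≤ 16 * Y ^ 2 → (#k.divisors : ℝ) ≤ D) :
    ∑ z ∈ nearCoincidences (2 ^ a) (2 ^ b) (2 ^ c) (2 ^ d) δ, divisorWeight z ≤
      10000 * D ^ 5 * (1 + log Y) * (δ ^ ((1 : ℝ) / 4) + √Y * δ) := by
  have hY : 1 ≤ Y := Nat.one_le_two_pow.trans ha
  have hD₀ : 0 ≤ D := (Nat.cast_nonneg _).trans (hD 1 one_ne_zero (by nlinarith))
  obtain hempty | ⟨⟨⟨n₁, n₂⟩, n₃, n₄⟩, hz⟩ :=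
    (nearCoincidences (2 ^ a) (2 ^ b) (2 ^ c) (2 ^ d) δ).eq_empty_or_nonempty
  · rw [hempty, sum_empty]
    positivity
  obtain ⟨⟨⟨h₁, h₂⟩, h₃, h₄⟩, -, h₂₁, h₄₃, h₃₁⟩ := mem_nearCoincidences.1 hz
  rw [mem_Ico] at h₁ h₂ h₃ h₄
  have hba : 2 ^ b ≤ 2 ^ a :=
    Nat.pow_le_pow_right two_pos (le_of_two_pow_lt_two_mul_two_pow h₂.1 h₂₁ h₁.2)
  have hdc : 2 ^ d ≤ 2 ^ c :=
    Nat.pow_le_pow_right two_pos (le_of_two_pow_lt_two_mul_two_pow h₄.1 h₄₃ h₃.2)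
  have hca : 2 ^ c ≤ 2 ^ a :=
    Nat.pow_le_pow_right two_pos (le_of_two_pow_lt_two_mul_two_pow h₃.1 h₃₁ h₁.2)
  have haY : ((2 ^ a : ℕ) : ℝ) ≤ Y := by exact_mod_cast ha
  refine (sum_divisorWeight_nearCoincidences_le (by positivity) (by positivity) hba hdc hca hδ
    fun k hk hle => hD k hk (hle.trans (by gcongr))).trans ?_
  gcongr

/-- The dyadic scales `⌊log₂ nᵢ⌋` of a quadruple `((n₁, n₂), (n₃, n₄))`. -/
def dyadicScale (z : (ℕ × ℕ) × (ℕ × ℕ)) : (ℕ × ℕ) × (ℕ × ℕ) :=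
  Prod.map (Prod.map (Nat.log 2) (Nat.log 2)) (Prod.map (Nat.log 2) (Nat.log 2)) z

lemma mem_Ico_two_pow_log {n : ℕ} (hn : n ≠ 0) :
    n ∈ Ico (2 ^ Nat.log 2 n) (2 * 2 ^ Nat.log 2 n) :=
  mem_Ico.2 ⟨Nat.pow_log_le_self 2 hn,
    by rw [← pow_succ']; exact Nat.lt_pow_succ_log_self one_lt_two n⟩

lemma dyadicScale_mem {Y : ℕ} {z : (ℕ × ℕ) × (ℕ × ℕ)} (hz : z ∈ quadBox Y) :
    dyadicScale z ∈ (range (Nat.log 2 Y + 1) ×ˢ range (Nat.log 2 Y + 1)) ×ˢ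
      (range (Nat.log 2 Y + 1) ×ˢ range (Nat.log 2 Y + 1)) := by
  have hlog : ∀ n ∈ Icc 1 Y, Nat.log 2 n ∈ range (Nat.log 2 Y + 1) := fun n hn =>
    mem_range.2 (Nat.lt_succ_of_le (Nat.log_mono_right (mem_Icc.1 hn).2))
  obtain ⟨⟨h₁, h₂⟩, h₃, h₄⟩ := mem_quadBox.1 hz
  exact mem_product.2 ⟨mem_product.2 ⟨hlog _ h₁, hlog _ h₂⟩,
    mem_product.2 ⟨hlog _ h₃, hlog _ h₄⟩⟩

lemma filter_dyadicScale_subset_nearCoincidences (Y : ℕ) (δ : ℝ) (k : (ℕ × ℕ) × (ℕ × ℕ)) :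
    {z ∈ {z ∈ orderedQuads Y | sqrtDiff z ≠ 0 ∧ |sqrtDiff z| ≤ δ} | dyadicScale z = k} ⊆
      nearCoincidences (2 ^ k.1.1) (2 ^ k.1.2) (2 ^ k.2.1) (2 ^ k.2.2) δ := by
  rintro ⟨⟨n₁, n₂⟩, n₃, n₄⟩ hz
  simp only [orderedQuads, mem_filter, mem_quadBox, mem_Icc] at hz
  obtain ⟨⟨⟨⟨⟨h₁, h₂⟩, h₃, h₄⟩, hord⟩, hdiff⟩, rfl⟩ := hz
  exact mem_nearCoincidences.2
    ⟨⟨⟨mem_Ico_two_pow_log (Nat.ne_of_gt h₁.1), mem_Ico_two_pow_log (Nat.ne_of_gt h₂.1)⟩,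
      mem_Ico_two_pow_log (Nat.ne_of_gt h₃.1), mem_Ico_two_pow_log (Nat.ne_of_gt h₄.1)⟩,
      hdiff, hord⟩

lemma sum_divisorWeight_orderedQuads_le {Y : ℕ} (hY : 0 < Y) (hδ : 0 < δ)
    (hD : ∀ k : ℕ, k ≠ 0 → k ≤ 16 * Y ^ 2 → (#k.divisors : ℝ) ≤ D) :
    ∑ z ∈ orderedQuads Y with sqrtDiff z ≠ 0 ∧ |sqrtDiff z| ≤ δ, divisorWeight z ≤
      (Nat.log 2 Y + 1) ^ 4 *
        (10000 * D ^ 5 * (1 + log Y) * (δ ^ ((1 : ℝ) / 4) + √Y * δ)) := by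
  set scales := (range (Nat.log 2 Y + 1) ×ˢ range (Nat.log 2 Y + 1)) ×ˢ
    (range (Nat.log 2 Y + 1) ×ˢ range (Nat.log 2 Y + 1)) with hscales
  have hmaps : ∀ z ∈ {z ∈ orderedQuads Y | sqrtDiff z ≠ 0 ∧ |sqrtDiff z| ≤ δ},
      dyadicScale z ∈ scales := fun z hz =>
    dyadicScale_mem (mem_filter.1 (mem_filter.1 hz).1).1
  have hcard : (#scales : ℝ) = (Nat.log 2 Y + 1) ^ 4 := by
    rw [hscales, card_product, card_product, card_range]
    push_cast
    ring
  rw [← sum_fiberwise_of_maps_to hmaps, ← hcard, ← nsmul_eq_mul]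
  refine sum_le_card_nsmul _ _ _ fun k hk => ?_
  have hkY : 2 ^ k.1.1 ≤ Y := by
    have := mem_range.1 (mem_product.1 (mem_product.1 hk).1).1
    exact (Nat.le_log_iff_pow_le one_lt_two hY.ne').1 (Nat.le_of_lt_succ this)
  exact (sum_le_sum_of_subset_of_nonneg (filter_dyadicScale_subset_nearCoincidences Y δ k)
    fun z _ _ => divisorWeight_nonneg z).trans
      (sum_divisorWeight_nearCoincidences_two_pow_le hkY hδ hD)

end WeightedCount

section Assembly

variable {T D δ : ℝ} {Y : ℕ}

lemma abs_sqrtDiff_le {z : (ℕ × ℕ) × (ℕ × ℕ)} (hz : z ∈ quadBox Y) :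
    |sqrtDiff z| ≤ 2 * √Y := by
  have hsqrt : ∀ n ∈ Icc 1 Y, √(n : ℝ) ≤ √Y := fun n hn =>
    sqrt_le_sqrt (by exact_mod_cast (mem_Icc.1 hn).2)
  obtain ⟨⟨h₁, h₂⟩, h₃, h₄⟩ := mem_quadBox.1 hz
  have hleft : sqrtSum z.1 ≤ 2 * √Y := by
    unfold sqrtSum
    linarith [hsqrt _ h₁, hsqrt _ h₂]
  have hright : sqrtSum z.2 ≤ 2 * √Y := by
    unfold sqrtSum
    linarith [hsqrt _ h₃, hsqrt _ h₄]
  exact abs_sub_le_of_nonneg_of_le (add_nonneg (sqrt_nonneg _) (sqrt_nonneg _)) hleft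
    (add_nonneg (sqrt_nonneg _) (sqrt_nonneg _)) hright

lemma two_mul_le_two_pow_log_floor (T : ℝ) : 2 * T ≤ 2 ^ (Nat.log 2 ⌊T⌋₊ + 2) := by
  have hfloor : (⌊T⌋₊ : ℝ) + 1 ≤ 2 ^ (Nat.log 2 ⌊T⌋₊ + 1) := by
    exact_mod_cast Nat.lt_pow_succ_log_self one_lt_two ⌊T⌋₊
  rw [pow_succ']
  linarith [Nat.lt_floor_add_one T]

lemma offdiagonalTerm_le_sum_dyadic (hT : 1 ≤ T) (hY : (Y : ℝ) ≤ T) {z : (ℕ × ℕ) × (ℕ × ℕ)}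
    (hz : z ∈ quadBox Y) :
    offdiagonalTerm T z ≤ ∑ j ∈ range (Nat.log 2 ⌊T⌋₊ + 3),
      if sqrtDiff z ≠ 0 ∧ |sqrtDiff z| ≤ 2 ^ j * T ^ (-(1 : ℝ) / 2) then
        divisorWeight z * (2 * T ^ ((3 : ℝ) / 2) / (2 ^ j * T ^ (-(1 : ℝ) / 2))) else 0 := by
  have hT₀ : 0 < T := by linarith
  by_cases hne : sqrtDiff z = 0
  · simp only [offdiagonalTerm, hne, ne_eq, not_true_eq_false, false_and, if_false, sum_const_zero,
      le_refl]
  have hrange : |sqrtDiff z| ≤ 2 ^ (Nat.log 2 ⌊T⌋₊ + 2) * T ^ (-(1 : ℝ) / 2) :=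
    calc |sqrtDiff z| ≤ 2 * √T := (abs_sqrtDiff_le hz).trans (by gcongr)
      _ = 2 * T * T ^ (-(1 : ℝ) / 2) := by
        rw [mul_assoc, ← rpow_one_add' hT₀.le (by norm_num), sqrt_eq_rpow]
        norm_num
      _ ≤ _ := by
        gcongr
        exact two_mul_le_two_pow_log_floor T
  have hcap : T ^ 2 = T ^ ((3 : ℝ) / 2) / T ^ (-(1 : ℝ) / 2) := by
    rw [← rpow_sub hT₀, ← rpow_natCast]
    norm_num
  simp only [offdiagonalTerm, ne_eq, hne, not_false_eq_true, true_and, if_true]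
  rw [← sum_filter, ← mul_sum, hcap]
  exact mul_le_mul_of_nonneg_left (min_div_le_sum_dyadic (by positivity) (by positivity) hrange)
    (divisorWeight_nonneg z)

lemma rpow_add_sqrt_mul_div_le (hT : 0 < T) (hY : (Y : ℝ) ≤ T ^ ((3 : ℝ) / 4))
    (hδ : T ^ (-(1 : ℝ) / 2) ≤ δ) :
    (δ ^ ((1 : ℝ) / 4) + √Y * δ) * (2 * T ^ ((3 : ℝ) / 2) / δ) ≤ 4 * T ^ ((15 : ℝ) / 8) := by
  have hδ₀ : 0 < δ := (rpow_pos_of_pos hT _).trans_le hδ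
  have hfirst : δ ^ ((1 : ℝ) / 4) ≤ T ^ ((3 : ℝ) / 8) * δ :=
    calc δ ^ ((1 : ℝ) / 4) = δ ^ (-(3 : ℝ) / 4) * δ := by
          rw [← rpow_add_one hδ₀.ne']
          norm_num
      _ ≤ (T ^ (-(1 : ℝ) / 2)) ^ (-(3 : ℝ) / 4) * δ := by
          gcongr ?_ * δ
          exact rpow_le_rpow_of_nonpos (by positivity) hδ (by norm_num)
      _ = T ^ ((3 : ℝ) / 8) * δ := by
          rw [← rpow_mul hT.le]
          norm_num
  have hsecond : √(Y : ℝ) ≤ T ^ ((3 : ℝ) / 8) :=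
    calc √(Y : ℝ) ≤ √(T ^ ((3 : ℝ) / 4)) := sqrt_le_sqrt hY
      _ = T ^ ((3 : ℝ) / 8) := by
        rw [sqrt_eq_rpow, ← rpow_mul hT.le]
        norm_num
  calc (δ ^ ((1 : ℝ) / 4) + √Y * δ) * (2 * T ^ ((3 : ℝ) / 2) / δ)
      ≤ (T ^ ((3 : ℝ) / 8) * δ + T ^ ((3 : ℝ) / 8) * δ) * (2 * T ^ ((3 : ℝ) / 2) / δ) := by gcongr
    _ = 4 * (T ^ ((3 : ℝ) / 8) * T ^ ((3 : ℝ) / 2)) := by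
      field_simp
      ring
    _ = 4 * T ^ ((15 : ℝ) / 8) := by
      rw [← rpow_add hT]
      norm_num

lemma sum_offdiagonalTerm_orderedQuads_le (hT : 1 ≤ T) (hY₀ : 0 < Y)
    (hY : (Y : ℝ) ≤ T ^ ((3 : ℝ) / 4))
    (hD : ∀ k : ℕ, k ≠ 0 → k ≤ 16 * Y ^ 2 → (#k.divisors : ℝ) ≤ D) :
    ∑ z ∈ orderedQuads Y, offdiagonalTerm T z ≤
      (Nat.log 2 ⌊T⌋₊ + 3) * ((Nat.log 2 Y + 1) ^ 4 * (10000 * D ^ 5 * (1 + log Y)) *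
        (4 * T ^ ((15 : ℝ) / 8))) := by
  have hT₀ : 0 < T := by linarith
  have hYT : (Y : ℝ) ≤ T := hY.trans (rpow_le_self_of_one_le hT (by norm_num))
  have hD₀ : 0 ≤ D := (Nat.cast_nonneg _).trans (hD 1 one_ne_zero (by nlinarith))
  set δ : ℕ → ℝ := fun j => 2 ^ j * T ^ (-(1 : ℝ) / 2)
  have hscale : ∀ j ∈ range (Nat.log 2 ⌊T⌋₊ + 3),
      ∑ z ∈ orderedQuads Y, (if sqrtDiff z ≠ 0 ∧ |sqrtDiff z| ≤ δ j then
        divisorWeight z * (2 * T ^ ((3 : ℝ) / 2) / δ j) else 0) ≤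
      (Nat.log 2 Y + 1) ^ 4 * (10000 * D ^ 5 * (1 + log Y)) * (4 * T ^ ((15 : ℝ) / 8)) := by
    intro j _
    have hδ : T ^ (-(1 : ℝ) / 2) ≤ δ j :=
      le_mul_of_one_le_left (by positivity) (one_le_pow₀ one_le_two)
    have hδ₀ : 0 < δ j := by positivity
    rw [← sum_filter, ← sum_mul]
    calc (∑ z ∈ orderedQuads Y with sqrtDiff z ≠ 0 ∧ |sqrtDiff z| ≤ δ j, divisorWeight z) *
          (2 * T ^ ((3 : ℝ) / 2) / δ j)
        ≤ (Nat.log 2 Y + 1) ^ 4 * (10000 * D ^ 5 * (1 + log Y) *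
            (δ j ^ ((1 : ℝ) / 4) + √Y * δ j)) * (2 * T ^ ((3 : ℝ) / 2) / δ j) := by
          gcongr
          exact sum_divisorWeight_orderedQuads_le hY₀ hδ₀ hD
      _ = (Nat.log 2 Y + 1) ^ 4 * (10000 * D ^ 5 * (1 + log Y)) *
            ((δ j ^ ((1 : ℝ) / 4) + √Y * δ j) * (2 * T ^ ((3 : ℝ) / 2) / δ j)) := by ring
      _ ≤ _ := by
          gcongr ?_ * ?_
          exact rpow_add_sqrt_mul_div_le hT₀ hY hδ
  calc ∑ z ∈ orderedQuads Y, offdiagonalTerm T z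
      ≤ ∑ z ∈ orderedQuads Y, ∑ j ∈ range (Nat.log 2 ⌊T⌋₊ + 3),
          if sqrtDiff z ≠ 0 ∧ |sqrtDiff z| ≤ δ j then
            divisorWeight z * (2 * T ^ ((3 : ℝ) / 2) / δ j) else 0 :=
        sum_le_sum fun z hz => offdiagonalTerm_le_sum_dyadic hT hYT (mem_filter.1 hz).1
    _ ≤ _ := by
        rw [sum_comm]
        refine (sum_le_card_nsmul _ _ _ hscale).trans_eq ?_
        rw [card_range, nsmul_eq_mul]
        push_cast
        rfl

lemma nat_log_two_le_two_mul_log (n : ℕ) : (Nat.log 2 n : ℝ) ≤ 2 * log n := by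
  have hlogb : (Nat.log 2 n : ℝ) ≤ log n / log 2 := by exact_mod_cast natLog_le_logb n 2
  refine hlogb.trans ?_
  rw [div_le_iff₀ (log_pos one_lt_two)]
  nlinarith [log_two_gt_d9, log_natCast_nonneg n]

lemma sum_offdiagonalTerm_quadBox_le (hT : 1 ≤ T)
    (hD : ∀ k : ℕ, k ≠ 0 → k ≤ 16 * ⌊T ^ ((3 : ℝ) / 4)⌋₊ ^ 2 → (#k.divisors : ℝ) ≤ D) :
    ∑ z ∈ quadBox ⌊T ^ ((3 : ℝ) / 4)⌋₊, offdiagonalTerm T z ≤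
      320000 * D ^ 5 * (3 + 2 * log T) ^ 6 * T ^ ((15 : ℝ) / 8) := by
  have hT₀ : 0 < T := by linarith
  set Y := ⌊T ^ ((3 : ℝ) / 4)⌋₊
  have hY₀ : 0 < Y := Nat.floor_pos.2 (one_le_rpow hT (by norm_num))
  have hY : (Y : ℝ) ≤ T ^ ((3 : ℝ) / 4) := Nat.floor_le (by positivity)
  have hD₀ : 0 ≤ D := (Nat.cast_nonneg _).trans (hD 1 one_ne_zero (by nlinarith))
  have hlogT : 0 ≤ log T := log_nonneg hT
  have hlogY : log Y ≤ log T := log_le_log (by exact_mod_cast hY₀)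
    (hY.trans (rpow_le_self_of_one_le hT (by norm_num)))
  have hlogfloor : log ⌊T⌋₊ ≤ log T :=
    log_le_log (by exact_mod_cast Nat.floor_pos.2 hT) (Nat.floor_le hT₀.le)
  have hscalesT : (Nat.log 2 ⌊T⌋₊ : ℝ) + 3 ≤ 3 + 2 * log T := by
    linarith [nat_log_two_le_two_mul_log ⌊T⌋₊]
  have hscalesY : (Nat.log 2 Y : ℝ) + 1 ≤ 3 + 2 * log T := by
    linarith [nat_log_two_le_two_mul_log Y]
  have hone : 1 + log Y ≤ 3 + 2 * log T := by linarith
  calc ∑ z ∈ quadBox Y, offdiagonalTerm T z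
      ≤ 8 * ((Nat.log 2 ⌊T⌋₊ + 3) * ((Nat.log 2 Y + 1) ^ 4 * (10000 * D ^ 5 * (1 + log Y)) *
          (4 * T ^ ((15 : ℝ) / 8)))) :=
        (sum_offdiagonalTerm_le_sum_orderedQuads hT₀.le Y).trans (by
          gcongr
          exact sum_offdiagonalTerm_orderedQuads_le hT hY₀ hY hD)
    _ ≤ 8 * ((3 + 2 * log T) * ((3 + 2 * log T) ^ 4 * (10000 * D ^ 5 * (3 + 2 * log T)) *
          (4 * T ^ ((15 : ℝ) / 8)))) := by
        gcongr
    _ = 320000 * D ^ 5 * (3 + 2 * log T) ^ 6 * T ^ ((15 : ℝ) / 8) := by ring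

lemma three_add_two_mul_log_le {e : ℝ} (he : 0 < e) (hT : 1 ≤ T) :
    3 + 2 * log T ≤ (3 + 2 / e) * T ^ e := by
  have hlog : log T ≤ T ^ e / e := log_le_rpow_div (by linarith) he
  calc 3 + 2 * log T ≤ 3 * T ^ e + 2 * (T ^ e / e) := by linarith [one_le_rpow hT he.le]
    _ = (3 + 2 / e) * T ^ e := by ring

lemma sixteen_mul_floor_rpow_sq_le (hT : 10 ≤ T) :
    (16 * ⌊T ^ ((3 : ℝ) / 4)⌋₊ ^ 2 : ℝ) ≤ T ^ (4 : ℝ) := by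
  have hfloor : (⌊T ^ ((3 : ℝ) / 4)⌋₊ : ℝ) ≤ T :=
    (Nat.floor_le (by positivity)).trans (rpow_le_self_of_one_le (by linarith) (by norm_num))
  calc (16 * ⌊T ^ ((3 : ℝ) / 4)⌋₊ ^ 2 : ℝ) ≤ T ^ 2 * T ^ 2 := by
        gcongr
        nlinarith
    _ = T ^ (4 : ℝ) := by
        rw [← pow_add]
        norm_cast

lemma exists_sum_offdiagonalTerm_quadBox_le {ε : ℝ} (hε : 0 < ε) : ∃ C : ℝ, 0 < C ∧
    ∀ T : ℝ, 10 ≤ T → ∑ z ∈ quadBox ⌊T ^ ((3 : ℝ) / 4)⌋₊, offdiagonalTerm T z ≤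
      C * T ^ (2 - 1 / 8 + ε) := by
  set e := ε / 11
  have he : 0 < e := by positivity
  obtain ⟨c, hc, hdivisors⟩ := exists_card_divisors_le_mul_rpow (ε := e / 4) (by positivity)
  refine ⟨320000 * c ^ 5 * (3 + 2 / e) ^ 6, by positivity, fun T hT => ?_⟩
  have hT₁ : 1 ≤ T := by linarith
  have hT₀ : 0 < T := by linarith
  have hD : ∀ k : ℕ, k ≠ 0 → k ≤ 16 * ⌊T ^ ((3 : ℝ) / 4)⌋₊ ^ 2 →
      (#k.divisors : ℝ) ≤ c * T ^ e := fun k hk hle =>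
    calc (#k.divisors : ℝ) ≤ c * (k : ℝ) ^ (e / 4) := hdivisors k hk
      _ ≤ c * (T ^ (4 : ℝ)) ^ (e / 4) := by
        gcongr
        exact (by exact_mod_cast hle : (k : ℝ) ≤ 16 * ⌊T ^ ((3 : ℝ) / 4)⌋₊ ^ 2).trans
          (sixteen_mul_floor_rpow_sq_le hT)
      _ = c * T ^ e := by rw [← rpow_mul hT₀.le, mul_div_cancel₀ _ four_ne_zero]
  have hpow : (T ^ e) ^ 11 * T ^ ((15 : ℝ) / 8) = T ^ (2 - 1 / 8 + ε) := by
    rw [← rpow_natCast, ← rpow_mul hT₀.le, ← rpow_add hT₀]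
    congr 1
    simp only [e]
    push_cast
    ring
  have hlogT : 0 ≤ log T := log_nonneg hT₁
  calc ∑ z ∈ quadBox ⌊T ^ ((3 : ℝ) / 4)⌋₊, offdiagonalTerm T z
      ≤ 320000 * (c * T ^ e) ^ 5 * (3 + 2 * log T) ^ 6 * T ^ ((15 : ℝ) / 8) :=
        sum_offdiagonalTerm_quadBox_le hT₁ hD
    _ ≤ 320000 * (c * T ^ e) ^ 5 * ((3 + 2 / e) * T ^ e) ^ 6 * T ^ ((15 : ℝ) / 8) := by
        gcongr
        exact three_add_two_mul_log_le he hT₁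
    _ = 320000 * c ^ 5 * (3 + 2 / e) ^ 6 * ((T ^ e) ^ 11 * T ^ ((15 : ℝ) / 8)) := by ring
    _ = 320000 * c ^ 5 * (3 + 2 / e) ^ 6 * T ^ (2 - 1 / 8 + ε) := by rw [hpow]

end Assembly

theorem offdiagonal_sum_bound_minus (ε : ℝ) (hε : 0 < ε) :
    ∃ C : ℝ, 0 < C ∧ ∀ T : ℝ, 10 ≤ T →
      (∑ n₁ ∈ Finset.Icc 1 ⌊T ^ ((3:ℝ)/4)⌋₊, ∑ n₂ ∈ Finset.Icc 1 ⌊T ^ ((3:ℝ)/4)⌋₊,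
       ∑ n₃ ∈ Finset.Icc 1 ⌊T ^ ((3:ℝ)/4)⌋₊, ∑ n₄ ∈ Finset.Icc 1 ⌊T ^ ((3:ℝ)/4)⌋₊,
        if Real.sqrt n₁ + Real.sqrt n₂ - Real.sqrt n₃ - Real.sqrt n₄ ≠ 0 then
          ((n₁.divisors.card * n₂.divisors.card * n₃.divisors.card * n₄.divisors.card : ℕ) : ℝ)
              / ((n₁ : ℝ) * n₂ * n₃ * n₄) ^ ((3:ℝ)/4)
            * min (T ^ 2) (T ^ ((3:ℝ)/2)
                / |Real.sqrt n₁ + Real.sqrt n₂ - Real.sqrt n₃ - Real.sqrt n₄|)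
        else 0)
      ≤ C * T ^ (2 - 1/8 + ε) := by
  obtain ⟨C, hC, hbound⟩ := exists_sum_offdiagonalTerm_quadBox_le hε
  refine ⟨C, hC, fun T hT => ?_⟩
  simpa only [quadBox, sum_product, offdiagonalTerm, divisorWeight, quadScale, sqrtDiff, sqrtSum,
    ← sub_sub] using hbound T hT
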